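/- arXiv:2403.07628 — 3 statements merged into one kernel-verified Lean document; each statement's English description precedes it below -/
import Mathlib

section
/- Fix an integer n ≥ 1 and real numbers β > 0, γ > 0, c_μ, c_σ. Let μ, σ : ℝ → ℝ be functions such that μ(α) − α/γ → c_μ and σ(α) − √(2α/γ) → c_σ as α → +∞. Then the rescaled Laguerre β-ensemble eigenvalue densities, x ↦ σ(α)^n · p_{L,α}(μ(α) + σ(α)x_1, …, μ(α) + σ(α)x_n), converge locally uniformly on ℝⁿ, as α → +∞, to the Gaussian β-ensemble eigenvalue density p_G(x_1, …, x_n). -/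
open Filter MeasureTheory

/-- The Vandermonde determinant `Δ(x) = ∏_{j>k} (x_j − x_k)`. -/
noncomputable def vdm (n : ℕ) (x : Fin n → ℝ) : ℝ :=
  ∏ p ∈ Finset.univ.filter (fun p : Fin n × Fin n => p.2 < p.1), (x p.1 - x p.2)

/-- The normalization constant of the Gaussian β-ensemble. -/
noncomputable def ZG (n : ℕ) (β γ : ℝ) : ℝ :=
  (2 * Real.pi) ^ ((n : ℝ) / 2) * ((n.factorial : ℝ) / Real.Gamma (β / 2) ^ n) *
    ∏ k ∈ Finset.range n,
      Real.Gamma (((k : ℝ) + 1) * β / 2) / (2 * γ) ^ ((1 + (k : ℝ) * β) / 2)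

/-- The Gaussian β-ensemble joint eigenvalue density. -/
noncomputable def pG (n : ℕ) (β γ : ℝ) (x : Fin n → ℝ) : ℝ :=
  (ZG n β γ)⁻¹ * |vdm n x| ^ β * ∏ k, Real.exp (-γ * (x k) ^ 2)

/-- The normalization constant of the Laguerre β-ensemble with parameter `α`. -/
noncomputable def ZL (n : ℕ) (β γ α : ℝ) : ℝ :=
  ((n.factorial : ℝ) / Real.Gamma (β / 2) ^ n) *
    ∏ k ∈ Finset.range n,
      Real.Gamma (α + 1 + (k : ℝ) * β / 2) * Real.Gamma (((k : ℝ) + 1) * β / 2) /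
        γ ^ (α + 1 + (k : ℝ) * β)

/-- The Laguerre β-ensemble joint eigenvalue density. -/
noncomputable def pL (n : ℕ) (β γ α : ℝ) (x : Fin n → ℝ) : ℝ :=
  (ZL n β γ α)⁻¹ * |vdm n x| ^ β *
    ∏ k, (if 0 < x k then (x k) ^ α * Real.exp (-γ * x k) else 0)

/-!
Divide the Laguerre weight `y ^ α * exp (-γ y)` by its maximal value, attained at `y = α / γ`.
At `y = α / γ * (1 + u)` the quotient is `exp (α (log (1 + u) - u))`, which tends to
`exp (-γ t ^ 2)` when `√α * u` tends to `√(2γ) * t`, as it does for `y = μ(α) + σ(α) t`.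
The maximal values and the powers of `σ(α)` coming from the change of variables and from the
Vandermonde determinant are absorbed into the normalization constant, which then tends to that of
the Gaussian ensemble by Stirling's formula for the Gamma function. Local uniformity comes from
letting the point `x` vary together with `α` in these limits, the limiting density being continuous.
-/

open Asymptotics
open scoped Topology

lemma tendstoLocallyUniformly_of_tendsto_prod_nhds {ι X Y : Type*} [TopologicalSpace X]
    [UniformSpace Y] {l : Filter ι} {F : ι → X → Y} {f : X → Y} (hf : Continuous f)
    (hF : ∀ x, Tendsto (fun p : ι × X => F p.1 p.2) (l ×ˢ 𝓝 x) (𝓝 (f x))) :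
    TendstoLocallyUniformly F f l := by
  rw [tendstoLocallyUniformly_iff_forall_tendsto]
  intro x
  have hfx : Tendsto (fun p : ι × X => f p.2) (l ×ˢ 𝓝 x) (𝓝 (f x)) :=
    (hf.tendsto x).comp tendsto_snd
  exact (hfx.prodMk_nhds (hF x)).mono_right (nhds_le_uniformity _)

lemma isLittleO_of_tendsto_nhds_of_tendsto_atTop {ι E : Type*} [SeminormedAddCommGroup E]
    {l : Filter ι} {f : ι → E} {g : ι → ℝ} {c : E} (hf : Tendsto f l (𝓝 c))
    (hg : Tendsto g l atTop) : f =o[l] g :=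
  (hf.isBigO_one ℝ).trans_isLittleO
    ((isLittleO_const_left_of_ne one_ne_zero).2 (tendsto_norm_atTop_atTop.comp hg))

lemma sub_mul_log_le_mul_log_sub_self {a b : ℝ} (ha : 0 < a) (hb : 0 < b) :
    (b - a) * Real.log a ≤ (b * Real.log b - b) - (a * Real.log a - a) := by
  have hlog : Real.log a - Real.log b ≤ a / b - 1 := by
    rw [← Real.log_div ha.ne' hb.ne']
    exact Real.log_le_sub_one_of_pos (div_pos ha hb)
  have hmul : b * (Real.log a - Real.log b) ≤ a - b := by
    calc b * (Real.log a - Real.log b) ≤ b * (a / b - 1) := by gcongr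
      _ = a - b := by field_simp
  linarith

/-- The error of Stirling's approximation `x log x - x + (log x) / 2` to `log Γ(x + 1)`. -/
noncomputable def stirlingRemainder (x : ℝ) : ℝ :=
  Real.log (Real.Gamma (x + 1)) - (x * Real.log x - x + Real.log x / 2)

lemma tendsto_stirlingRemainder_natCast :
    Tendsto (fun n : ℕ => stirlingRemainder n) atTop (𝓝 (Real.log (2 * Real.pi) / 2)) := by
  have hlim : Real.log √Real.pi + Real.log 2 / 2 = Real.log (2 * Real.pi) / 2 := by
    rw [Real.log_sqrt (by positivity), Real.log_mul (by norm_num) (by positivity)]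
    ring
  rw [← hlim]
  refine ((Stirling.tendsto_stirlingSeq_sqrt_pi.log (by positivity)).add_const _).congr' ?_
  filter_upwards [eventually_gt_atTop 0] with n hn
  have hn' : (0 : ℝ) < n := by exact_mod_cast hn
  rw [Stirling.log_stirlingSeq_formula, stirlingRemainder, Real.Gamma_nat_eq_factorial,
    Real.log_mul (by norm_num) hn'.ne', Real.log_div hn'.ne' (Real.exp_pos 1).ne', Real.log_exp]
  ring

lemma log_Gamma_add_one {y : ℝ} (hy : 0 < y) :
    Real.log (Real.Gamma (y + 1)) = Real.log (Real.Gamma y) + Real.log y := by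
  rw [Real.Gamma_add_one hy.ne', Real.log_mul hy.ne' (Real.Gamma_pos_of_pos hy).ne', add_comm]

lemma log_Gamma_nat_add_sub_mem_Icc {n : ℕ} (hn : n ≠ 0) {s : ℝ} (hs : s ∈ Set.Icc (0 : ℝ) 1) :
    Real.log (Real.Gamma (n + s + 1)) - Real.log (Real.Gamma (n + 1)) ∈
      Set.Icc (s * Real.log n) (s * Real.log (n + 1)) := by
  rcases hs.1.eq_or_lt with rfl | hs0
  · simp
  have hle := Real.BohrMollerup.f_add_nat_le Real.convexOn_log_Gamma log_Gamma_add_one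
    n.succ_ne_zero hs0 hs.2
  have hge := Real.BohrMollerup.f_add_nat_ge Real.convexOn_log_Gamma log_Gamma_add_one
    (n := n + 1) (by lia) hs0
  simp only [Function.comp_apply, Nat.succ_eq_add_one, Nat.cast_add, Nat.cast_one,
    add_sub_cancel_right] at hle hge
  rw [add_right_comm, Set.mem_Icc]
  constructor <;> linarith

-- The increments of `log Γ(· + 1)` and of `x log x - x` over `[n, n + s]` both lie in
-- `[s log n, s log (n + 1)]`, so they differ by at most the length of this interval.
lemma abs_stirlingRemainder_nat_add_sub_le {n : ℕ} (hn : n ≠ 0) {s : ℝ}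
    (hs : s ∈ Set.Icc (0 : ℝ) 1) :
    |stirlingRemainder (n + s) - stirlingRemainder n| ≤
      3 / 2 * (Real.log (n + 1) - Real.log n) := by
  obtain ⟨hs0, hs1⟩ := hs
  have hn' : (0 : ℝ) < n := by positivity
  obtain ⟨hΓge, hΓle⟩ := log_Gamma_nat_add_sub_mem_Icc hn ⟨hs0, hs1⟩
  have hlog_ge : Real.log n ≤ Real.log (n + s) := Real.log_le_log hn' (by linarith)
  have hlog_le : Real.log (n + s) ≤ Real.log (n + 1) :=
    Real.log_le_log (by positivity) (by linarith)
  have hent_ge := sub_mul_log_le_mul_log_sub_self hn' (show 0 < n + s by positivity)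
  have hent_le : (n + s) * Real.log (n + s) - (n + s) - (n * Real.log n - n) ≤
      s * Real.log (n + 1) := by
    have htangent := sub_mul_log_le_mul_log_sub_self (show 0 < n + s by positivity) hn'
    have hmul := mul_le_mul_of_nonneg_left hlog_le hs0
    linarith
  have hwidth : s * (Real.log (n + 1) - Real.log n) ≤ Real.log (n + 1) - Real.log n :=
    mul_le_of_le_one_left (by linarith) hs1
  unfold stirlingRemainder
  rw [abs_le]
  constructor <;> linarith

lemma tendsto_stirlingRemainder :
    Tendsto stirlingRemainder atTop (𝓝 (Real.log (2 * Real.pi) / 2)) := by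
  have hfloor := tendsto_stirlingRemainder_natCast.comp (tendsto_nat_floor_atTop (α := ℝ))
  have hdiff : Tendsto (fun x : ℝ => stirlingRemainder x - stirlingRemainder ⌊x⌋₊) atTop (𝓝 0) := by
    have hbound := (Real.tendsto_log_nat_add_one_sub_log.comp
      (tendsto_nat_floor_atTop (α := ℝ))).const_mul (3 / 2)
    rw [mul_zero] at hbound
    refine squeeze_zero_norm' ?_ hbound
    filter_upwards [eventually_ge_atTop 1] with x hx
    have hfract : x - ⌊x⌋₊ ∈ Set.Icc (0 : ℝ) 1 :=
      ⟨sub_nonneg.2 (Nat.floor_le (by linarith)), by linarith [Nat.lt_floor_add_one x]⟩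
    simpa using abs_stirlingRemainder_nat_add_sub_le (Nat.floor_pos.2 hx).ne' hfract
  simpa using hdiff.add hfloor

lemma tendsto_mul_log_add_sub_mul_log (c : ℝ) :
    Tendsto (fun x => ((x + c) * Real.log (x + c) - (x + c)) - (x * Real.log x - x) -
      c * Real.log x) atTop (𝓝 0) := by
  have hupper := (Real.tendsto_log_comp_add_sub_log c).const_mul c
  rw [mul_zero] at hupper
  refine squeeze_zero' ?_ ?_ hupper <;>
    filter_upwards [eventually_gt_atTop 0, eventually_gt_atTop (-c)] with x hx hxc
  · linarith [sub_mul_log_le_mul_log_sub_self hx (show 0 < x + c by linarith)]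
  · linarith [sub_mul_log_le_mul_log_sub_self (show 0 < x + c by linarith) hx]

lemma tendsto_log_Gamma_add_sub_stirling (c : ℝ) :
    Tendsto (fun x => Real.log (Real.Gamma (x + 1 + c)) - ((x + c + 1 / 2) * Real.log x - x))
      atTop (𝓝 (Real.log (2 * Real.pi) / 2)) := by
  have hrem : Tendsto (fun x => stirlingRemainder (x + c)) atTop _ :=
    tendsto_stirlingRemainder.comp (tendsto_atTop_add_const_right _ c tendsto_id)
  have hsum := (hrem.add (tendsto_mul_log_add_sub_mul_log c)).add
    ((Real.tendsto_log_comp_add_sub_log c).div_const 2)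
  rw [add_zero, zero_div, add_zero] at hsum
  refine hsum.congr fun x => ?_
  rw [stirlingRemainder, add_right_comm x c 1]
  ring

theorem tendsto_Gamma_add_div_stirling (c : ℝ) :
    Tendsto (fun x => Real.Gamma (x + 1 + c) / (x ^ (x + c + 1 / 2) * Real.exp (-x))) atTop
      (𝓝 √(2 * Real.pi)) := by
  have hexp := (tendsto_log_Gamma_add_sub_stirling c).rexp
  rw [← Real.log_sqrt (by positivity), Real.exp_log (by positivity)] at hexp
  refine hexp.congr' ?_
  filter_upwards [eventually_gt_atTop 0, eventually_gt_atTop (-(1 + c))] with x hx hxc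
  rw [Real.exp_sub, Real.exp_log (Real.Gamma_pos_of_pos (by linarith)), Real.rpow_def_of_pos hx,
    ← Real.exp_add]
  ring_nf

section LogExpansion

lemma isLittleO_log_one_add_sub_taylor :
    (fun u : ℝ => Real.log (1 + u) - u + u ^ 2 / 2) =o[𝓝 0] fun u => u ^ 2 := by
  have hbound : (fun u : ℝ => Real.log (1 + u) - u + u ^ 2 / 2) =O[𝓝 0] fun u => u ^ 3 := by
    refine IsBigO.of_bound 2 ?_
    filter_upwards [Metric.ball_mem_nhds (0 : ℝ) (one_half_pos (α := ℝ))] with u hu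
    have hu' : |u| < 1 / 2 := by simpa using hu
    have htaylor : |-u + u ^ 2 / 2 + Real.log (1 + u)| ≤ |u| ^ 3 / (1 - |u|) := by
      simpa [Finset.sum_range_succ, one_add_one_eq_two] using
        Real.abs_log_sub_add_sum_range_le (x := -u) (by rw [abs_neg]; linarith) 2
    rw [Real.norm_eq_abs, Real.norm_eq_abs, abs_pow]
    calc |Real.log (1 + u) - u + u ^ 2 / 2| = |-u + u ^ 2 / 2 + Real.log (1 + u)| := by ring_nf
      _ ≤ |u| ^ 3 / (1 - |u|) := htaylor
      _ ≤ 2 * |u| ^ 3 := by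
          rw [div_le_iff₀ (by linarith)]
          nlinarith [pow_nonneg (abs_nonneg u) 3]
  exact hbound.trans_isLittleO (isLittleO_pow_pow (by norm_num))

variable {ι : Type*} {l : Filter ι} {a u : ι → ℝ} {d : ℝ}

lemma tendsto_zero_of_tendsto_sqrt_mul (ha : Tendsto a l atTop)
    (hu : Tendsto (fun i => √(a i) * u i) l (𝓝 d)) : Tendsto u l (𝓝 0) := by
  have hsqrt : Tendsto (fun i => √(a i)) l atTop := Real.tendsto_sqrt_atTop.comp ha
  refine (hu.div_atTop hsqrt).congr' ?_
  filter_upwards [hsqrt.eventually_gt_atTop 0] with i hi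
  field_simp

lemma tendsto_mul_log_one_add_sub_self (ha : Tendsto a l atTop)
    (hu : Tendsto (fun i => √(a i) * u i) l (𝓝 d)) :
    Tendsto (fun i => a i * (Real.log (1 + u i) - u i)) l (𝓝 (-d ^ 2 / 2)) := by
  have hsq : Tendsto (fun i => a i * u i ^ 2) l (𝓝 (d ^ 2)) := by
    refine (hu.pow 2).congr' ?_
    filter_upwards [ha.eventually_ge_atTop 0] with i hi
    rw [mul_pow, Real.sq_sqrt hi]
  have hrem : Tendsto (fun i => a i * (Real.log (1 + u i) - u i + u i ^ 2 / 2)) l (𝓝 0) := by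
    rw [← isLittleO_one_iff ℝ]
    exact ((isBigO_refl a l).mul_isLittleO (isLittleO_log_one_add_sub_taylor.comp_tendsto
      (tendsto_zero_of_tendsto_sqrt_mul ha hu))).trans_isBigO (hsq.isBigO_one ℝ)
  have hsub := hrem.sub (hsq.div_const 2)
  rw [zero_sub, ← neg_div] at hsub
  exact hsub.congr fun i => by ring

end LogExpansion

/-- The one-particle weight `y ^ α * exp (-γ y)` on `(0, ∞)` of the Laguerre ensemble, extended
by zero; for `α, γ > 0` it is largest at `y = α / γ`. -/
noncomputable def laguerreWeight (γ α y : ℝ) : ℝ :=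
  if 0 < y then y ^ α * Real.exp (-γ * y) else 0

lemma laguerreWeight_of_pos {y : ℝ} (hy : 0 < y) (γ α : ℝ) :
    laguerreWeight γ α y = Real.exp (α * Real.log y - γ * y) := by
  rw [laguerreWeight, if_pos hy, Real.rpow_def_of_pos hy, ← Real.exp_add]
  ring_nf

lemma laguerreWeight_div_peak {γ α u : ℝ} (hγ : 0 < γ) (hα : 0 < α) (hu : 0 < 1 + u) :
    laguerreWeight γ α (α / γ * (1 + u)) / laguerreWeight γ α (α / γ) =
      Real.exp (α * (Real.log (1 + u) - u)) := by
  rw [laguerreWeight_of_pos (by positivity), laguerreWeight_of_pos (by positivity),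
    ← Real.exp_sub, Real.log_mul (by positivity) hu.ne']
  congr 1
  field_simp
  ring

theorem tendsto_laguerreWeight_div_peak {ι : Type*} {l : Filter ι} {a y : ι → ℝ} {γ d : ℝ}
    (hγ : 0 < γ) (ha : Tendsto a l atTop)
    (hy : Tendsto (fun i => (y i - a i / γ) / √(a i)) l (𝓝 d)) :
    Tendsto (fun i => laguerreWeight γ (a i) (y i) / laguerreWeight γ (a i) (a i / γ)) l
      (𝓝 (Real.exp (-(γ * d) ^ 2 / 2))) := by
  have hu : Tendsto (fun i => √(a i) * (γ * y i / a i - 1)) l (𝓝 (γ * d)) := by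
    refine (hy.const_mul γ).congr' ?_
    filter_upwards [ha.eventually_gt_atTop 0] with i hi
    have hsq : √(a i) ^ 2 = a i := Real.sq_sqrt hi.le
    field_simp
    rw [hsq, mul_comm]
  refine (tendsto_mul_log_one_add_sub_self ha hu).rexp.congr' ?_
  have hu0 := tendsto_zero_of_tendsto_sqrt_mul ha hu
  filter_upwards [ha.eventually_gt_atTop 0,
    hu0.eventually_const_lt (show (-1 : ℝ) < 0 by norm_num)] with i hi hui
  rw [← laguerreWeight_div_peak hγ hi (by linarith)]
  congr 2
  field_simp
  ring

lemma vdm_eq_prod_Iio (n : ℕ) (x : Fin n → ℝ) :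
    vdm n x = ∏ j, ∏ k ∈ Finset.Iio j, (x j - x k) := by
  rw [vdm, Finset.prod_filter, ← Finset.univ_product_univ, Finset.prod_product]
  refine Finset.prod_congr rfl fun j _ => ?_
  rw [← Finset.prod_filter, Finset.filter_gt_eq_Iio]

lemma vdm_affine (n : ℕ) (m s : ℝ) (x : Fin n → ℝ) :
    vdm n (fun i => m + s * x i) = (∏ k ∈ Finset.range n, s ^ k) * vdm n x := by
  simp only [vdm_eq_prod_Iio, add_sub_add_left_eq_sub, ← mul_sub, Finset.prod_mul_distrib,
    Finset.prod_const, Fin.card_Iio]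
  rw [Fin.prod_univ_eq_prod_range]

lemma continuous_abs_vdm_rpow (n : ℕ) {β : ℝ} (hβ : 0 ≤ β) :
    Continuous fun x => |vdm n x| ^ β := by
  have hvdm : Continuous (vdm n) := by
    unfold vdm
    fun_prop
  exact hvdm.abs.rpow_const fun _ => Or.inr hβ

lemma pow_mul_abs_vdm_affine_rpow (n : ℕ) (β m : ℝ) {s : ℝ} (hs : 0 < s) (x : Fin n → ℝ) :
    s ^ n * |vdm n (fun i => m + s * x i)| ^ β =
      (∏ k ∈ Finset.range n, s ^ (1 + (k : ℝ) * β)) * |vdm n x| ^ β := by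
  have hfactor (k : ℕ) : s ^ (1 + (k : ℝ) * β) = s * (s ^ k) ^ β := by
    rw [Real.rpow_add hs, Real.rpow_one, Real.rpow_mul hs.le, Real.rpow_natCast]
  rw [vdm_affine, abs_mul, abs_of_pos (by positivity),
    Real.mul_rpow (by positivity) (abs_nonneg _),
    ← Real.finsetProd_rpow _ _ fun _ _ => by positivity]
  simp only [hfactor, Finset.prod_mul_distrib, Finset.prod_const, Finset.card_range, mul_assoc]

section Normalization

lemma ZG_pos (n : ℕ) {β γ : ℝ} (hβ : 0 < β) (hγ : 0 < γ) : 0 < ZG n β γ := by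
  unfold ZG
  positivity

lemma ZG_eq_prod (n : ℕ) (β γ : ℝ) :
    ZG n β γ = (n.factorial / Real.Gamma (β / 2) ^ n) *
      ∏ k ∈ Finset.range n, √(2 * Real.pi) / (2 * γ) ^ ((1 + (k : ℝ) * β) / 2) *
        Real.Gamma (((k : ℝ) + 1) * β / 2) := by
  have hpi : (2 * Real.pi) ^ ((n : ℝ) / 2) = √(2 * Real.pi) ^ n := by
    rw [Real.sqrt_eq_rpow, ← Real.rpow_mul_natCast (by positivity)]
    ring_nf
  simp only [ZG, hpi, Finset.prod_mul_distrib, Finset.prod_div_distrib, Finset.prod_const,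
    Finset.card_range]
  ring

lemma ZL_div_eq_prod (n : ℕ) (β γ α s w : ℝ) :
    ZL n β γ α / ((∏ k ∈ Finset.range n, s ^ (1 + (k : ℝ) * β)) * w ^ n) =
      (n.factorial / Real.Gamma (β / 2) ^ n) *
      ∏ k ∈ Finset.range n, Real.Gamma (α + 1 + (k : ℝ) * β / 2) /
        (γ ^ (α + 1 + (k : ℝ) * β) * s ^ (1 + (k : ℝ) * β) * w) *
        Real.Gamma (((k : ℝ) + 1) * β / 2) := by
  simp only [ZL, Finset.prod_mul_distrib, Finset.prod_div_distrib, Finset.prod_const,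
    Finset.card_range]
  ring

lemma rpow_mul_rpow_mul_laguerreWeight_peak {γ α s : ℝ} (hγ : 0 < γ) (hα : 0 < α) (hs : 0 < s)
    (p : ℝ) :
    γ ^ (α + p) * s ^ p * laguerreWeight γ α (α / γ) =
      α ^ (α + p / 2) * Real.exp (-α) * (γ * (s / √α)) ^ p := by
  rw [laguerreWeight_of_pos (by positivity), Real.rpow_def_of_pos hγ, Real.rpow_def_of_pos hs,
    Real.rpow_def_of_pos hα, Real.rpow_def_of_pos (by positivity),
    Real.log_mul hγ.ne' (by positivity), Real.log_div hs.ne' (by positivity), Real.log_sqrt hα.le,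
    Real.log_div hα.ne' hγ.ne', mul_div_cancel₀ _ hγ.ne']
  simp only [← Real.exp_add]
  ring_nf

variable {γ : ℝ} {σ : ℝ → ℝ}

lemma tendsto_div_sqrt_of_isEquivalent (hγ : 0 < γ)
    (hσ : σ ~[atTop] fun α => √(2 * α / γ)) :
    Tendsto (fun α => σ α / √α) atTop (𝓝 √(2 / γ)) := by
  have hratio := hσ.div (IsEquivalent.refl (u := Real.sqrt))
  refine hratio.symm.tendsto_nhds (tendsto_const_nhds.congr' ?_)
  filter_upwards [eventually_gt_atTop 0] with α hα
  rw [Pi.div_apply, ← Real.sqrt_div (by positivity), div_right_comm, mul_div_cancel_right₀ _ hα.ne']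

lemma tendsto_sqrt_two_mul_div_atTop (hγ : 0 < γ) :
    Tendsto (fun α => √(2 * α / γ)) atTop atTop :=
  Real.tendsto_sqrt_atTop.comp ((tendsto_id.const_mul_atTop two_pos).atTop_div_const hγ)

lemma eventually_pos_of_isEquivalent_sqrt (hγ : 0 < γ) (hσ : σ ~[atTop] fun α => √(2 * α / γ)) :
    ∀ᶠ α in atTop, 0 < σ α :=
  (hσ.symm.tendsto_atTop (tendsto_sqrt_two_mul_div_atTop hγ)).eventually_gt_atTop 0

lemma tendsto_Gamma_div_rescaled (hγ : 0 < γ) (hσ : σ ~[atTop] fun α => √(2 * α / γ)) (q : ℝ) :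
    Tendsto (fun α => Real.Gamma (α + 1 + q / 2) /
      (γ ^ (α + 1 + q) * σ α ^ (1 + q) * laguerreWeight γ α (α / γ))) atTop
      (𝓝 (√(2 * Real.pi) / (2 * γ) ^ ((1 + q) / 2))) := by
  have hlim : (γ * √(2 / γ)) ^ (1 + q) = (2 * γ) ^ ((1 + q) / 2) := by
    have hsqrt : γ * √(2 / γ) = √(2 * γ) := by
      rw [eq_comm, Real.sqrt_eq_iff_mul_self_eq (by positivity) (by positivity), mul_mul_mul_comm,
        Real.mul_self_sqrt (by positivity)]
      field_simp
    rw [hsqrt, Real.sqrt_eq_rpow, ← Real.rpow_mul (by positivity)]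
    ring_nf
  have hscale := ((tendsto_div_sqrt_of_isEquivalent hγ hσ).const_mul γ).rpow_const
    (p := 1 + q) (Or.inl (by positivity))
  rw [hlim] at hscale
  refine ((tendsto_Gamma_add_div_stirling (q / 2)).div hscale (by positivity)).congr' ?_
  filter_upwards [eventually_gt_atTop 0, eventually_pos_of_isEquivalent_sqrt hγ hσ] with α hα hσα
  rw [Pi.div_apply, add_assoc α 1 q, rpow_mul_rpow_mul_laguerreWeight_peak hγ hα hσα, div_div]
  ring_nf

theorem tendsto_ZL_div_rescaled (n : ℕ) (β : ℝ) (hγ : 0 < γ)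
    (hσ : σ ~[atTop] fun α => √(2 * α / γ)) :
    Tendsto (fun α => ZL n β γ α / ((∏ k ∈ Finset.range n, σ α ^ (1 + (k : ℝ) * β)) *
      laguerreWeight γ α (α / γ) ^ n)) atTop (𝓝 (ZG n β γ)) := by
  simp only [ZL_div_eq_prod, ZG_eq_prod]
  exact (tendsto_finsetProd _ fun k _ =>
    (tendsto_Gamma_div_rescaled hγ hσ _).mul_const _).const_mul _

end Normalization

section Density

lemma continuous_pG (n : ℕ) {β : ℝ} (hβ : 0 ≤ β) (γ : ℝ) : Continuous (pG n β γ) := by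
  have hvdm := continuous_abs_vdm_rpow n hβ
  unfold pG
  fun_prop

lemma pow_mul_pL_affine (n : ℕ) (β γ α m : ℝ) {s w : ℝ} (hs : 0 < s) (hw : w ≠ 0)
    (x : Fin n → ℝ) :
    s ^ n * pL n β γ α (fun i => m + s * x i) =
      (ZL n β γ α / ((∏ k ∈ Finset.range n, s ^ (1 + (k : ℝ) * β)) * w ^ n))⁻¹ *
        |vdm n x| ^ β * ∏ i, laguerreWeight γ α (m + s * x i) / w := by
  calc s ^ n * pL n β γ α (fun i => m + s * x i)
      = (ZL n β γ α)⁻¹ * (s ^ n * |vdm n (fun i => m + s * x i)| ^ β) *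
          ∏ i, laguerreWeight γ α (m + s * x i) := by
        simp only [pL, laguerreWeight]
        ring
    _ = _ := by
        rw [pow_mul_abs_vdm_affine_rpow n β m hs, Finset.prod_div_distrib, Finset.prod_const,
          Finset.card_univ, Fintype.card_fin, inv_div]
        generalize ∏ k ∈ Finset.range n, s ^ (1 + (k : ℝ) * β) = S
        field_simp

variable {γ : ℝ} {μ σ : ℝ → ℝ}

lemma tendsto_laguerreWeight_affine_div_peak {ι : Type*} {l : Filter ι} {a t : ι → ℝ} {t₀ : ℝ}
    (hγ : 0 < γ) (hμ : (fun α => μ α - α / γ) =o[atTop] Real.sqrt)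
    (hσ : σ ~[atTop] fun α => √(2 * α / γ)) (ha : Tendsto a l atTop) (ht : Tendsto t l (𝓝 t₀)) :
    Tendsto (fun i => laguerreWeight γ (a i) (μ (a i) + σ (a i) * t i) /
      laguerreWeight γ (a i) (a i / γ)) l (𝓝 (Real.exp (-γ * t₀ ^ 2))) := by
  have hlim : -(γ * (0 + √(2 / γ) * t₀)) ^ 2 / 2 = -γ * t₀ ^ 2 := by
    rw [zero_add, mul_pow, mul_pow, Real.sq_sqrt (by positivity)]
    field_simp
  rw [← hlim]
  refine tendsto_laguerreWeight_div_peak hγ ha ?_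
  refine ((hμ.tendsto_div_nhds_zero.comp ha).add
    (((tendsto_div_sqrt_of_isEquivalent hγ hσ).comp ha).mul ht)).congr fun i => ?_
  simp only [Function.comp_apply]
  ring

theorem stmt0_general (n : ℕ) {β : ℝ} (hβ : 0 < β) (hγ : 0 < γ)
    (hμ : (fun α => μ α - α / γ) =o[atTop] Real.sqrt)
    (hσ : σ ~[atTop] fun α => √(2 * α / γ)) :
    TendstoLocallyUniformly
      (fun α (x : Fin n → ℝ) => σ α ^ n * pL n β γ α (fun i => μ α + σ α * x i))
      (pG n β γ) atTop := by
  refine tendstoLocallyUniformly_of_tendsto_prod_nhds (continuous_pG n hβ.le γ) fun x => ?_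
  have hα : Tendsto (fun p : ℝ × (Fin n → ℝ) => p.1) (atTop ×ˢ 𝓝 x) atTop := tendsto_fst
  have hy : Tendsto (fun p : ℝ × (Fin n → ℝ) => p.2) (atTop ×ˢ 𝓝 x) (𝓝 x) := tendsto_snd
  have hZ := ((tendsto_ZL_div_rescaled n β hγ hσ).inv₀ (ZG_pos n hβ hγ).ne').comp hα
  have hvdm := ((continuous_abs_vdm_rpow n hβ.le).tendsto x).comp hy
  have hweight := tendsto_finsetProd Finset.univ fun i _ =>
    tendsto_laguerreWeight_affine_div_peak hγ hμ hσ hα (((continuous_apply i).tendsto x).comp hy)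
  refine ((hZ.mul hvdm).mul hweight).congr' ?_
  filter_upwards [hα.eventually (eventually_pos_of_isEquivalent_sqrt hγ hσ),
    hα.eventually_gt_atTop 0] with p hσp hp
  have hpeak : laguerreWeight γ p.1 (p.1 / γ) ≠ 0 := by
    rw [laguerreWeight_of_pos (by positivity)]
    positivity
  exact (pow_mul_pL_affine n β γ p.1 (μ p.1) hσp hpeak p.2).symm

end Density

/-- Laguerre-to-Gaussian transition: the rescaled Laguerre β-ensemble eigenvalue densities
converge locally uniformly, as `α → ∞`, to the Gaussian β-ensemble eigenvalue density. -/
theorem stmt0 (n : ℕ) (hn : 1 ≤ n) (β γ cμ cσ : ℝ) (hβ : 0 < β) (hγ : 0 < γ)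
    (μ σ : ℝ → ℝ)
    (hμ : Tendsto (fun α => μ α - α / γ) atTop (nhds cμ))
    (hσ : Tendsto (fun α => σ α - Real.sqrt (2 * α / γ)) atTop (nhds cσ)) :
    TendstoLocallyUniformly
      (fun α (x : Fin n → ℝ) => σ α ^ n * pL n β γ α (fun i => μ α + σ α * x i))
      (pG n β γ) atTop := by
  exact stmt0_general n hβ hγ
    (isLittleO_of_tendsto_nhds_of_tendsto_atTop hμ Real.tendsto_sqrt_atTop)
    (isLittleO_of_tendsto_nhds_of_tendsto_atTop hσ (tendsto_sqrt_two_mul_div_atTop hγ))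
end

section
/- Fix an integer n ≥ 0 and real constants c_μ, c_σ, and let μ, σ : ℝ → ℝ satisfy μ(α) − α → c_μ and σ(α) − √(2α) → c_σ as α → +∞. Then the functions x ↦ σ(α)^{1/2} · φ_n^{(α)}(μ(α) + σ(α)x) converge locally uniformly on ℝ, as α → +∞, to the Hermite wave function x ↦ φ_n(x). (For each compact set of x the argument μ(α) + σ(α)x is eventually positive, so the left-hand side is eventually well defined.) -/
open Filter

/-- The generalized Laguerre polynomial
`L_n^{(α)}(x) = ∑_{k=0}^n (−1)^k (Γ(n+α+1)/(Γ(k+α+1)(n−k)!k!)) x^k`. -/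
noncomputable def laguerreL (n : ℕ) (α : ℝ) (x : ℝ) : ℝ :=
  ∑ k ∈ Finset.range (n + 1),
    (-1 : ℝ) ^ k *
      (Real.Gamma ((n : ℝ) + α + 1) /
        (Real.Gamma ((k : ℝ) + α + 1) * ((n - k).factorial : ℝ) * (k.factorial : ℝ))) *
      x ^ k

/-- The physicists' Hermite polynomials: `H_0 = 1`, `H_1 = 2x`,
`H_{n+2}(x) = 2x·H_{n+1}(x) − 2(n+1)·H_n(x)`. -/
noncomputable def hermiteH : ℕ → ℝ → ℝ
  | 0, _ => 1
  | 1, x => 2 * x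
  | (n + 2), x => 2 * x * hermiteH (n + 1) x - 2 * ((n : ℝ) + 1) * hermiteH n x

/-- The Laguerre wave function `φ_n^{(α)}(x) = √(n!/Γ(n+α+1)) x^{α/2} e^{−x/2} (−1)^n L_n^{(α)}(x)`. -/
noncomputable def phiL (n : ℕ) (α : ℝ) (x : ℝ) : ℝ :=
  Real.sqrt ((n.factorial : ℝ) / Real.Gamma ((n : ℝ) + α + 1)) * x ^ (α / 2) *
    Real.exp (-x / 2) * (-1 : ℝ) ^ n * laguerreL n α x

/-- The Hermite wave function `φ_n(x) = e^{−x²/2} H_n(x)/(π^{1/4} √(2^n n!))`. -/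
noncomputable def phiH (n : ℕ) (x : ℝ) : ℝ :=
  Real.exp (-x ^ 2 / 2) * hermiteH n x /
    (Real.pi ^ ((1 : ℝ) / 4) * Real.sqrt (2 ^ n * (n.factorial : ℝ)))

/-!
Put `y = a + √(2a) t` with `a → ∞`. After multiplication by `(-√(2/a))^n n!`, the three-term
recurrence of `L_n^{(a)}(y)` turns in the limit into the Hermite recurrence at `t`, so the
polynomial factor of the Laguerre wave function converges to `H_n(t)`. Up to a ratio of Gamma
functions tending to `1`, the square of the remaining factor is the gamma density
`y^a e^{-y} / Γ(a + 1)` magnified by `√(2a)`, which Stirling's formula for the real Gamma function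
and a second-order expansion of `log (y / a)` show to converge to `e^{-t²} / √π`. All limits are
taken along arbitrary filters; applying them to `atTop ×ˢ 𝓝 x` makes the convergence locally
uniform, because `φ_n` is continuous.
-/

open Asymptotics Real Topology

lemma laguerreL_zero {α : ℝ} (hα : -1 < α) (x : ℝ) : laguerreL 0 α x = 1 := by
  have hΓ : Gamma (α + 1) ≠ 0 := (Gamma_pos_of_pos (by linarith)).ne'
  simp [laguerreL, hΓ]

lemma laguerreL_eq_sum_choose {n N : ℕ} (hN : n < N) (α x : ℝ) :
    laguerreL n α x = Gamma (n + α + 1) / n.factorial *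
      ∑ k ∈ Finset.range N, n.choose k * (-x) ^ k / Gamma (k + α + 1) := by
  have htrunc : ∑ k ∈ Finset.range (n + 1), n.choose k * (-x) ^ k / Gamma (k + α + 1) =
      ∑ k ∈ Finset.range N, n.choose k * (-x) ^ k / Gamma (k + α + 1) := by
    refine Finset.sum_subset (Finset.range_subset_range.mpr hN) fun k _ hk => ?_
    simp [Nat.choose_eq_zero_of_lt (show n < k by simpa using hk)]
  rw [laguerreL, ← htrunc, Finset.mul_sum]
  refine Finset.sum_congr rfl fun k hk => ?_
  rw [Nat.cast_choose ℝ (Nat.lt_succ_iff.mp (Finset.mem_range.mp hk)), neg_pow x]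
  field_simp

lemma laguerreL_succ {α : ℝ} (hα : -1 < α) (n : ℕ) (x : ℝ) :
    laguerreL (n + 1) α x = laguerreL (n + 1) (α + 1) x - laguerreL n (α + 1) x := by
  have hn : n < n + 2 := by lia
  have hpos (k : ℕ) : 0 < k + α + 1 := by linarith [k.cast_nonneg (α := ℝ)]
  have hΓ_succ (k : ℕ) : Gamma (k + (α + 1) + 1) = (k + α + 1) * Gamma (k + α + 1) := by
    rw [← add_assoc, Gamma_add_one (hpos k).ne']
  simp only [laguerreL_eq_sum_choose hn, laguerreL_eq_sum_choose (n + 1).lt_succ_self,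
    Finset.mul_sum, ← Finset.sum_sub_distrib]
  refine Finset.sum_congr rfl fun k hk => ?_
  have hchoose : (n.choose k : ℝ) * (n + 1) = (n + 1).choose k * (n + 1 - k) := by
    have hk' : k ≤ n + 1 := Nat.lt_succ_iff.mp (Finset.mem_range.mp hk)
    exact_mod_cast congrArg (Nat.cast (R := ℝ)) (Nat.choose_mul_succ_eq n k)
  have hk0 := (hpos k).ne'
  have hkΓ := (Gamma_pos_of_pos (hpos k)).ne'
  rw [hΓ_succ, hΓ_succ, show (n : ℝ) + (α + 1) + 1 = (n + 1 : ℕ) + α + 1 by push_cast; ring,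
    Nat.factorial_succ]
  push_cast
  field_simp
  linear_combination (-x) ^ k * Gamma (n + 1 + α + 1) * hchoose

lemma mul_laguerreL_add_one {α : ℝ} (hα : -1 < α) (n : ℕ) (x : ℝ) :
    x * laguerreL n (α + 1) x =
      (n + α + 1) * laguerreL n α x - (n + 1) * laguerreL (n + 1) α x := by
  have hn : (n : ℝ) + α + 1 ≠ 0 := by linarith [n.cast_nonneg (α := ℝ)]
  have hpascal : x * ∑ k ∈ Finset.range (n + 1), n.choose k * (-x) ^ k / Gamma (k + (α + 1) + 1) =
      ∑ k ∈ Finset.range (n + 2), n.choose k * (-x) ^ k / Gamma (k + α + 1) -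
      ∑ k ∈ Finset.range (n + 2), (n + 1).choose k * (-x) ^ k / Gamma (k + α + 1) := by
    rw [← Finset.sum_sub_distrib, Finset.sum_range_succ' _ (n + 1), Finset.mul_sum]
    simp only [Nat.choose_zero_right, sub_self, add_zero]
    refine Finset.sum_congr rfl fun k _ => ?_
    rw [Nat.choose_succ_succ, show (k : ℝ) + (α + 1) + 1 = (k + 1 : ℕ) + α + 1 by push_cast; ring]
    push_cast
    ring
  have hΓ : Gamma (n + (α + 1) + 1) = (n + α + 1) * Gamma (n + α + 1) := by
    rw [← Gamma_add_one hn]; ring_nf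
  have hΓ' : Gamma ((n + 1 : ℕ) + α + 1) = (n + α + 1) * Gamma (n + α + 1) := by
    rw [← Gamma_add_one hn]; push_cast; ring_nf
  rw [laguerreL_eq_sum_choose n.lt_succ_self (α + 1), mul_left_comm, hpascal,
    laguerreL_eq_sum_choose (show n < n + 2 by lia),
    laguerreL_eq_sum_choose (n + 1).lt_succ_self, hΓ, hΓ', Nat.factorial_succ]
  push_cast
  field_simp

lemma laguerreL_one {α : ℝ} (hα : -1 < α) (x : ℝ) : laguerreL 1 α x = 1 + α - x := by
  have h := mul_laguerreL_add_one hα 0 x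
  rw [laguerreL_zero (by linarith), laguerreL_zero hα] at h
  push_cast at h
  linarith

lemma laguerreL_add_two {α : ℝ} (hα : -1 < α) (n : ℕ) (x : ℝ) :
    (n + 2) * laguerreL (n + 2) α x =
      (2 * n + 3 + α - x) * laguerreL (n + 1) α x - (n + 1 + α) * laguerreL n α x := by
  have h := mul_laguerreL_add_one hα (n + 1) x
  push_cast at h
  linear_combination h - mul_laguerreL_add_one hα n x + x * laguerreL_succ hα n x

/-- The logarithm of Stirling's approximation `√(2πx) (x/e)^x` to `Γ(x + 1)`, written so that its
increments are easy to estimate. -/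
noncomputable def logStirling (x : ℝ) : ℝ :=
  log (2 * π) / 2 + (x + 1 / 2) * log x - x

lemma exp_logStirling {x : ℝ} (hx : 0 < x) :
    exp (logStirling x) = √(2 * x * π) * (x / exp 1) ^ x := by
  rw [rpow_def_of_pos (by positivity), log_div hx.ne' (exp_ne_zero 1), log_exp,
    ← exp_log (show 0 < √(2 * x * π) by positivity), log_sqrt (by positivity),
    mul_right_comm, log_mul (by positivity) hx.ne', ← exp_add, logStirling]
  ring_nf

lemma tendsto_log_factorial_sub_logStirling :
    Tendsto (fun n : ℕ => log n.factorial - logStirling n) atTop (𝓝 0) := by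
  have hlim := (isEquivalent_iff_tendsto_one (by
    filter_upwards [eventually_gt_atTop 0] with n hn
    positivity)).mp Stirling.factorial_isEquivalent_stirling
  rw [← log_one]
  refine (hlim.log one_ne_zero).congr' ?_
  filter_upwards [eventually_gt_atTop 0] with n hn
  have hn' : (0 : ℝ) < n := mod_cast hn
  rw [Pi.div_apply, log_div (by positivity) (by positivity), ← rpow_natCast,
    ← exp_logStirling hn', log_exp]

lemma logStirling_add_sub_mem_Icc {x s : ℝ} (hx : 0 < x) (hs : s ∈ Set.Icc 0 1) :
    logStirling (x + s) - logStirling x - s * log x ∈ Set.Icc 0 (3 / (2 * x)) := by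
  obtain ⟨hs0, hs1⟩ := hs
  have hxs : 0 < x + s := by linarith
  have hincr : logStirling (x + s) - logStirling x - s * log x =
      (x + s + 1 / 2) * log ((x + s) / x) - s := by
    rw [log_div hxs.ne' hx.ne', logStirling, logStirling]
    ring
  have hlower : s / (x + s) ≤ log ((x + s) / x) :=
    (one_sub_inv_le_log_of_pos (by positivity)).trans' (le_of_eq (by field_simp; ring))
  have hupper : log ((x + s) / x) ≤ s / x :=
    (log_le_sub_one_of_pos (by positivity)).trans_eq (by field_simp; ring)
  rw [hincr]
  constructor
  · have : s ≤ (x + s) * log ((x + s) / x) := by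
      rwa [div_le_iff₀' hxs] at hlower
    have : 0 ≤ log ((x + s) / x) := hlower.trans' (by positivity)
    linarith
  · calc (x + s + 1 / 2) * log ((x + s) / x) - s
        ≤ (x + s + 1 / 2) * (s / x) - s := by gcongr
      _ = s * (s + 1 / 2) / x := by field_simp; ring
      _ ≤ 1 * (1 + 1 / 2) / x := by gcongr
      _ = 3 / (2 * x) := by field_simp; norm_num

lemma log_Gamma_add_one_s4 {x : ℝ} (hx : 0 < x) : log (Gamma (x + 1)) = log (Gamma x) + log x := by
  rw [Gamma_add_one hx.ne', log_mul hx.ne' (Gamma_pos_of_pos hx).ne', add_comm]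

lemma log_Gamma_add_sub_mem_Icc {n : ℕ} {s : ℝ} (hn : n ≠ 0) (hs : s ∈ Set.Icc 0 1) :
    log (Gamma (n + s + 1)) - log n.factorial - s * log n ∈ Set.Icc 0 (1 / n : ℝ) := by
  have hn' : (0 : ℝ) < n := by positivity
  rw [← Gamma_nat_eq_factorial]
  obtain ⟨hs0, hs1⟩ := hs
  obtain rfl | hs0 := hs0.eq_or_lt
  · simp
  have hlower := BohrMollerup.f_add_nat_ge (n := n + 1) convexOn_log_Gamma log_Gamma_add_one_s4
    (by lia) hs0
  have hupper := BohrMollerup.f_add_nat_le (n := n + 1) convexOn_log_Gamma log_Gamma_add_one_s4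
    n.succ_ne_zero hs0 hs1
  push_cast [Function.comp_apply, add_sub_cancel_right, add_right_comm] at hlower hupper
  have hlog : log (n + 1) - log n ≤ 1 / n := by
    rw [← log_div (by positivity) hn'.ne']
    exact (log_le_sub_one_of_pos (by positivity)).trans_eq (by field_simp; ring)
  have hlog0 : log n ≤ log (n + 1) := log_le_log hn' (by linarith)
  constructor
  · linarith
  · nlinarith

lemma tendsto_log_Gamma_sub_logStirling :
    Tendsto (fun x => log (Gamma (x + 1)) - logStirling x) atTop (𝓝 0) := by
  have hfloor : Tendsto (fun x : ℝ => log ⌊x⌋₊.factorial - logStirling ⌊x⌋₊) atTop (𝓝 0) :=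
    tendsto_log_factorial_sub_logStirling.comp tendsto_nat_floor_atTop
  have hbound : Tendsto (fun x : ℝ => 3 / 2 / (⌊x⌋₊ : ℝ)) atTop (𝓝 0) :=
    (tendsto_const_div_atTop_nhds_zero_nat _).comp tendsto_nat_floor_atTop
  suffices hdiff : Tendsto (fun x : ℝ => log (Gamma (x + 1)) - logStirling x -
      (log ⌊x⌋₊.factorial - logStirling ⌊x⌋₊)) atTop (𝓝 0) by simpa using hdiff.add hfloor
  refine squeeze_zero_norm' ?_ hbound
  filter_upwards [eventually_ge_atTop 1] with x hx
  have hn : ⌊x⌋₊ ≠ 0 := (Nat.floor_pos.mpr hx).ne'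
  have hfract : x - ⌊x⌋₊ ∈ Set.Icc 0 1 :=
    ⟨sub_nonneg.mpr (Nat.floor_le (by linarith)), by linarith [Nat.lt_floor_add_one x]⟩
  obtain ⟨hΓ0, hΓ1⟩ := log_Gamma_add_sub_mem_Icc hn hfract
  obtain ⟨hS0, hS1⟩ := logStirling_add_sub_mem_Icc (Nat.cast_pos.mpr hn.bot_lt) hfract
  rw [add_sub_cancel] at hΓ0 hΓ1 hS0 hS1
  rw [← div_div] at hS1
  have : 1 / (⌊x⌋₊ : ℝ) ≤ 3 / 2 / ⌊x⌋₊ := by gcongr; norm_num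
  rw [norm_eq_abs, abs_le]
  constructor <;> linarith

theorem Gamma_add_one_isEquivalent_stirling :
    (fun x => Gamma (x + 1)) ~[atTop] fun x => √(2 * x * π) * (x / exp 1) ^ x := by
  refine isEquivalent_of_tendsto_one ?_
  have hlim := (continuous_exp.tendsto 0).comp tendsto_log_Gamma_sub_logStirling
  rw [exp_zero] at hlim
  refine hlim.congr' ?_
  filter_upwards [eventually_gt_atTop 0] with x hx
  rw [Function.comp_apply, exp_sub, exp_log (Gamma_pos_of_pos (by positivity)),
    exp_logStirling hx, Pi.div_apply]

lemma Gamma_natCast_add_isEquivalent (n : ℕ) :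
    (fun a : ℝ => Gamma (n + a + 1)) ~[atTop] fun a => a ^ n * Gamma (a + 1) := by
  induction n with
  | zero => simpa using IsEquivalent.refl
  | succ n ih =>
    have hlin : (fun a : ℝ => n + a + 1) ~[atTop] id := by
      have hconst : (fun _ : ℝ => (n : ℝ) + 1) =o[atTop] (id : ℝ → ℝ) :=
        isLittleO_const_id_atTop _
      exact (IsEquivalent.refl.add_isLittleO hconst).congr_left (.of_forall fun a => by
        simp only [Pi.add_apply, id]; ring)
    refine (hlin.mul ih).congr_left ?_ |>.congr_right ?_
    · filter_upwards [eventually_gt_atTop 0] with a ha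
      rw [Pi.mul_apply, ← Gamma_add_one (by positivity)]
      push_cast
      ring_nf
    · filter_upwards with a
      simp only [Pi.mul_apply, id]
      ring

section GammaDensity

variable {ι : Type*} {l : Filter ι} {a y : ι → ℝ} {t : ℝ}

lemma log_one_add_sub_isLittleO :
    (fun u => log (1 + u) - (u - u ^ 2 / 2)) =o[𝓝 0] fun u => u ^ 2 := by
  have h := hasFPowerSeriesAt_log_one_add.isBigO_sub_partialSum_pow 3
  have hcube : (fun u : ℝ => ‖u‖ ^ 3) =o[𝓝 0] fun u => u ^ 2 := by
    simpa only [norm_pow] using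
      (isLittleO_pow_pow (𝕜 := ℝ) (show 2 < 3 by norm_num)).norm_left
  refine (h.trans_isLittleO hcube).congr_left fun u => ?_
  simp only [zero_add, FormalMultilinearSeries.partialSum, Finset.sum_range_succ,
    Finset.sum_range_zero, FormalMultilinearSeries.apply_eq_prod_smul_coeff, Finset.prod_const,
    Finset.card_univ, Fintype.card_fin, FormalMultilinearSeries.coeff_ofScalars, smul_eq_mul]
  push_cast
  ring

lemma tendsto_sqrt_two_mul_atTop : Tendsto (fun a : ℝ => √(2 * a)) atTop atTop :=
  tendsto_sqrt_atTop.comp (tendsto_id.const_mul_atTop two_pos)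

lemma tendsto_sub_div_self_zero (ha : Tendsto a l atTop)
    (hy : Tendsto (fun i => (y i - a i) / √(2 * a i)) l (𝓝 t)) :
    Tendsto (fun i => (y i - a i) / a i) l (𝓝 0) := by
  have h := (hy.div_atTop (tendsto_sqrt_two_mul_atTop.comp ha)).const_mul 2
  rw [mul_zero] at h
  refine h.congr' ?_
  filter_upwards [ha.eventually_gt_atTop 0] with i hi
  rw [Function.comp_apply, div_div, mul_self_sqrt (by positivity)]
  field_simp

lemma eventually_pos_of_tendsto_sub_div (ha : Tendsto a l atTop)
    (hy : Tendsto (fun i => (y i - a i) / √(2 * a i)) l (𝓝 t)) : ∀ᶠ i in l, 0 < y i := by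
  filter_upwards [ha.eventually_gt_atTop 0,
    (tendsto_sub_div_self_zero ha hy).eventually_const_lt (show (-1 : ℝ) < 0 by norm_num)]
    with i hi hyi
  rw [lt_div_iff₀ hi] at hyi
  linarith

lemma tendsto_mul_log_div_sub (ha : Tendsto a l atTop)
    (hy : Tendsto (fun i => (y i - a i) / √(2 * a i)) l (𝓝 t)) :
    Tendsto (fun i => a i * log (y i / a i) - (y i - a i)) l (𝓝 (-t ^ 2)) := by
  have hu := tendsto_sub_div_self_zero ha hy
  have hsq : Tendsto (fun i => a i * ((y i - a i) / a i) ^ 2) l (𝓝 (2 * t ^ 2)) := by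
    refine ((hy.pow 2).const_mul 2).congr' ?_
    filter_upwards [ha.eventually_gt_atTop 0] with i hi
    rw [div_pow, sq_sqrt (by positivity)]
    field_simp
  have hrem : Tendsto (fun i => a i * (log (1 + (y i - a i) / a i) -
      ((y i - a i) / a i - ((y i - a i) / a i) ^ 2 / 2))) l (𝓝 0) :=
    (((isBigO_refl a l).mul_isLittleO (log_one_add_sub_isLittleO.comp_tendsto hu)).trans_isBigO
      (hsq.isBigO_one ℝ)).tendsto_zero_of_tendsto tendsto_const_nhds
  have hlim := hrem.sub (hsq.div_const 2)
  rw [zero_sub, mul_div_cancel_left₀ _ two_ne_zero] at hlim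
  refine hlim.congr' ?_
  filter_upwards [ha.eventually_gt_atTop 0] with i hi
  rw [show 1 + (y i - a i) / a i = y i / a i by field_simp; ring]
  field_simp
  ring

theorem tendsto_sqrt_two_mul_mul_gamma_density (ha : Tendsto a l atTop)
    (hy : Tendsto (fun i => (y i - a i) / √(2 * a i)) l (𝓝 t)) :
    Tendsto (fun i => √(2 * a i) * (y i ^ a i * exp (-y i) / Gamma (a i + 1))) l
      (𝓝 (exp (-t ^ 2) / √π)) := by
  have hstirling : Tendsto (fun i => √(2 * a i * π) * (a i / exp 1) ^ a i / Gamma (a i + 1)) l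
      (𝓝 1) := by
    refine ((isEquivalent_iff_tendsto_one ?_).mp Gamma_add_one_isEquivalent_stirling.symm).comp ha
    filter_upwards [eventually_gt_atTop 0] with x hx
    exact (Gamma_pos_of_pos (by positivity)).ne'
  have hgauss := ((continuous_exp.tendsto _).comp (tendsto_mul_log_div_sub ha hy)).div_const √π
  have hlim := hstirling.mul hgauss
  rw [one_mul] at hlim
  refine hlim.congr' ?_
  filter_upwards [ha.eventually_gt_atTop 0, eventually_pos_of_tendsto_sub_div ha hy] with i hai hyi
  have hpow : y i ^ a i * exp (-y i) =
      (a i / exp 1) ^ a i * exp (a i * log (y i / a i) - (y i - a i)) := by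
    rw [rpow_def_of_pos hyi, rpow_def_of_pos (by positivity), log_div hai.ne' (exp_ne_zero 1),
      log_div hyi.ne' hai.ne', log_exp, ← exp_add, ← exp_add]
    ring_nf
  rw [hpow, Function.comp_apply, sqrt_mul (by positivity)]
  field_simp

end GammaDensity

/-- The Laguerre polynomial `L_n^{(a)}(y)` rescaled so that, when `y = a + √(2a) t` and `a → ∞`,
its three-term recurrence becomes that of `hermiteH n t`. -/
noncomputable def rescaledLaguerre (n : ℕ) (a y : ℝ) : ℝ :=
  (-√(2 / a)) ^ n * n.factorial * laguerreL n a y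

lemma rescaledLaguerre_add_two {a : ℝ} (ha : 0 < a) (n : ℕ) (y : ℝ) :
    rescaledLaguerre (n + 2) a y =
      √(2 / a) * (y - (2 * n + 3 + a)) * rescaledLaguerre (n + 1) a y -
        2 / a * ((n + 1) * (n + 1 + a)) * rescaledLaguerre n a y := by
  have hsq : √(2 / a) ^ 2 = 2 / a := sq_sqrt (by positivity)
  simp only [rescaledLaguerre, Nat.factorial_succ]
  generalize √(2 / a) = r at *
  rw [← hsq]
  push_cast
  linear_combination (-r) ^ (n + 2) * ((n + 1) * n.factorial) *
    laguerreL_add_two (show -1 < a by linarith) n y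

lemma sqrt_two_div_mul_eq {a : ℝ} (ha : 0 < a) (z : ℝ) : √(2 / a) * z = 2 * (z / √(2 * a)) := by
  rw [show 2 / a = 2 ^ 2 / (2 * a) by field_simp, sqrt_div (by positivity),
    sqrt_sq (by norm_num)]
  ring

section Limits

variable {ι : Type*} {l : Filter ι} {a y s : ι → ℝ} {t : ℝ}

lemma tendsto_sqrt_two_div_mul_sub_add (c : ℝ) (ha : Tendsto a l atTop)
    (hy : Tendsto (fun i => (y i - a i) / √(2 * a i)) l (𝓝 t)) :
    Tendsto (fun i => √(2 / a i) * (y i - (c + a i))) l (𝓝 (2 * t)) := by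
  have hc : Tendsto (fun i => c / √(2 * a i)) l (𝓝 0) :=
    (tendsto_sqrt_two_mul_atTop.comp ha).const_div_atTop c
  have hlim := (hy.sub hc).const_mul 2
  rw [sub_zero] at hlim
  refine hlim.congr' ?_
  filter_upwards [ha.eventually_gt_atTop 0] with i hi
  rw [sqrt_two_div_mul_eq hi]
  ring

lemma tendsto_rescaledLaguerre_hermiteH (n : ℕ) (ha : Tendsto a l atTop)
    (hy : Tendsto (fun i => (y i - a i) / √(2 * a i)) l (𝓝 t)) :
    Tendsto (fun i => rescaledLaguerre n (a i) (y i)) l (𝓝 (hermiteH n t)) := by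
  induction n using Nat.twoStepInduction with
  | zero =>
    refine tendsto_const_nhds.congr' ?_
    filter_upwards [ha.eventually_gt_atTop 0] with i hi
    simp [rescaledLaguerre, hermiteH, laguerreL_zero (show -1 < a i by linarith)]
  | one =>
    refine (tendsto_sqrt_two_div_mul_sub_add 1 ha hy).congr' ?_
    filter_upwards [ha.eventually_gt_atTop 0] with i hi
    rw [rescaledLaguerre, laguerreL_one (by linarith), pow_one, Nat.factorial_one, Nat.cast_one]
    ring
  | more n ih ih' =>
    have hcoeff : Tendsto (fun i => 2 / a i * ((n + 1) * (n + 1 + a i))) l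
        (𝓝 (2 * ((n : ℝ) + 1))) := by
      have h := (ha.const_div_atTop (2 * ((n : ℝ) + 1) ^ 2)).add_const (2 * ((n : ℝ) + 1))
      rw [zero_add] at h
      refine h.congr' ?_
      filter_upwards [ha.eventually_gt_atTop 0] with i hi
      field_simp
    refine (((tendsto_sqrt_two_div_mul_sub_add (2 * n + 3) ha hy).mul ih').sub
      (hcoeff.mul ih)).congr' ?_
    filter_upwards [ha.eventually_gt_atTop 0] with i hi
    exact (rescaledLaguerre_add_two hi n (y i)).symm

lemma sqrt_mul_phiL_eq (n : ℕ) {a y : ℝ} (s : ℝ) (ha : 0 < a) (hy : 0 < y) :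
    √s * phiL n a y = √(s / √(2 * a)) *
      √(√(2 * a) * (y ^ a * exp (-y) / Gamma (a + 1)) *
        (a ^ n * Gamma (a + 1) / Gamma (n + a + 1))) *
      (rescaledLaguerre n a y / √(2 ^ n * n.factorial)) := by
  have hweight : y ^ (a / 2) * exp (-y / 2) = √(y ^ a * exp (-y)) := by
    rw [sqrt_mul (by positivity), exp_half, sqrt_eq_rpow (y ^ a), ← rpow_mul hy.le, mul_one_div]
  have hnorm : √(n.factorial / Gamma (n + a + 1)) =
      √(a ^ n / Gamma (n + a + 1)) * (√(2 / a) ^ n * n.factorial / √(2 ^ n * n.factorial)) := by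
    rw [sqrt_eq_iff_eq_sq (by positivity) (by positivity), mul_pow, div_pow, mul_pow,
      pow_right_comm, sq_sqrt (by positivity), sq_sqrt (by positivity), sq_sqrt (by positivity),
      div_pow 2 a]
    field_simp
  have hdensity : √(√(2 * a) * (y ^ a * exp (-y) / Gamma (a + 1)) *
        (a ^ n * Gamma (a + 1) / Gamma (n + a + 1))) =
      √√(2 * a) * √(y ^ a * exp (-y)) * √(a ^ n / Gamma (n + a + 1)) := by
    rw [← sqrt_mul (by positivity), ← sqrt_mul (by positivity)]
    congr 1
    field_simp
  rw [phiL, rescaledLaguerre, neg_pow √(2 / a), hdensity, hnorm, ← hweight,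
    sqrt_div' s (sqrt_nonneg _)]
  field_simp

theorem tendsto_sqrt_mul_phiL_phiH (n : ℕ) (ha : Tendsto a l atTop)
    (hy : Tendsto (fun i => (y i - a i) / √(2 * a i)) l (𝓝 t))
    (hs : Tendsto (fun i => s i / √(2 * a i)) l (𝓝 1)) :
    Tendsto (fun i => √(s i) * phiL n (a i) (y i)) l (𝓝 (phiH n t)) := by
  have hΓ : Tendsto (fun i => a i ^ n * Gamma (a i + 1) / Gamma (n + a i + 1)) l (𝓝 1) := by
    refine ((isEquivalent_iff_tendsto_one ?_).mp (Gamma_natCast_add_isEquivalent n).symm).comp ha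
    filter_upwards [eventually_gt_atTop 0] with x hx
    exact (Gamma_pos_of_pos (by positivity)).ne'
  have hlim := (hs.sqrt.mul ((tendsto_sqrt_two_mul_mul_gamma_density ha hy).mul hΓ).sqrt).mul
    ((tendsto_rescaledLaguerre_hermiteH n ha hy).div_const √(2 ^ n * n.factorial))
  have hphiH : √1 * √(exp (-t ^ 2) / √π * 1) * (hermiteH n t / √(2 ^ n * n.factorial)) =
      phiH n t := by
    have hpi : π ^ ((1 : ℝ) / 4) = √√π := by
      rw [sqrt_eq_rpow, sqrt_eq_rpow, ← rpow_mul pi_pos.le]; norm_num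
    rw [phiH, hpi, exp_half, sqrt_one, one_mul, mul_one, sqrt_div (exp_pos _).le]
    ring
  rw [hphiH] at hlim
  refine hlim.congr' ?_
  filter_upwards [ha.eventually_gt_atTop 0, eventually_pos_of_tendsto_sub_div ha hy] with i hai hyi
  exact (sqrt_mul_phiL_eq n (s i) hai hyi).symm

end Limits

lemma continuous_hermiteH (n : ℕ) : Continuous (hermiteH n) := by
  induction n using Nat.twoStepInduction with
  | zero => exact continuous_const
  | one => exact continuous_const.mul continuous_id
  | more n ih ih' =>
    exact ((continuous_const.mul continuous_id).mul ih').sub (continuous_const.mul ih)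

lemma continuous_phiH (n : ℕ) : Continuous (phiH n) := by
  have := continuous_hermiteH n
  unfold phiH
  fun_prop

lemma isLittleO_sqrt_two_mul_of_tendsto {f : ℝ → ℝ} {c : ℝ} (hf : Tendsto f atTop (𝓝 c)) :
    f =o[atTop] fun α => √(2 * α) :=
  (hf.isBigO_one ℝ).trans_isLittleO
    ((isLittleO_const_left_of_ne one_ne_zero).mpr
      (tendsto_norm_atTop_atTop.comp tendsto_sqrt_two_mul_atTop))

theorem stmt4_general (n : ℕ) (μ σ : ℝ → ℝ)
    (hμ : (fun α => μ α - α) =o[atTop] fun α => √(2 * α))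
    (hσ : σ ~[atTop] fun α => √(2 * α)) :
    TendstoLocallyUniformly (fun α x => √(σ α) * phiL n α (μ α + σ α * x)) (phiH n) atTop := by
  have hσ1 : Tendsto (fun α => σ α / √(2 * α)) atTop (𝓝 1) := by
    refine (isEquivalent_iff_tendsto_one ?_).mp hσ
    filter_upwards [eventually_gt_atTop 0] with α hα
    positivity
  rw [tendstoLocallyUniformly_iff_forall_tendsto]
  intro x
  have hα : Tendsto (fun p : ℝ × ℝ => p.1) (atTop ×ˢ 𝓝 x) atTop := tendsto_fst
  have hx : Tendsto (fun p : ℝ × ℝ => p.2) (atTop ×ˢ 𝓝 x) (𝓝 x) := tendsto_snd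
  have hy : Tendsto (fun p : ℝ × ℝ => (μ p.1 + σ p.1 * p.2 - p.1) / √(2 * p.1))
      (atTop ×ˢ 𝓝 x) (𝓝 x) := by
    have h := (hμ.tendsto_div_nhds_zero.comp hα).add ((hσ1.comp hα).mul hx)
    rw [zero_add, one_mul] at h
    refine h.congr fun p => ?_
    simp only [Function.comp_apply]
    ring
  have hphiL := tendsto_sqrt_mul_phiL_phiH n hα hy (hσ1.comp hα)
  have hphiH := ((continuous_phiH n).tendsto x).comp hx
  exact (hphiH.prodMk_nhds hphiL).mono_right (nhds_le_uniformity (phiH n x))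

/-- Laguerre-to-Hermite wave function transition: `σ(α)^{1/2} φ_n^{(α)}(μ(α)+σ(α)x)`
converges locally uniformly to `φ_n(x)` as `α → +∞`. -/
theorem stmt4 (n : ℕ) (cμ cσ : ℝ) (μ σ : ℝ → ℝ)
    (hμ : Tendsto (fun α => μ α - α) atTop (nhds cμ))
    (hσ : Tendsto (fun α => σ α - Real.sqrt (2 * α)) atTop (nhds cσ)) :
    TendstoLocallyUniformly
      (fun α (x : ℝ) => Real.sqrt (σ α) * phiL n α (μ α + σ α * x))
      (phiH n) atTop :=
  stmt4_general n μ σ (isLittleO_sqrt_two_mul_of_tendsto hμ)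
    (isLittleO_sqrt_two_mul_of_tendsto hσ).isEquivalent
end

section
/- Let Q_k ∈ ℚ[X] (k ≥ 1) be defined by Q_1 = −(3X² + 2)/8 and Q_{k+1} = (3/2)(k+1)·X·Q_k − (1/2)(X² − 1)·Q_k′ − (1/2)·∑_{j=1}^{k−1} Q_j·Q_{k−j}. Then for every k ≥ 1: (i) there is exactly one polynomial P ∈ ℚ[X] satisfying (X² − 1)·P′ − 3(2k−1)·X·P = Q_{2k−1}; it is an odd polynomial of degree exactly 6k−3 whose leading coefficient equals 2^{2k−1}·B_{2k}(1/2)/(4k(2k−1)), where B_{2k}(1/2) = (2^{1−2k} − 1)·B_{2k} with B_{2k} the 2k-th Bernoulli number; and (ii) there is exactly one polynomial P ∈ ℚ[X] of degree < 6k satisfying (X² − 1)·P′ − 6k·X·P = Q_{2k}; it is an even polynomial of degree exactly 2k. -/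
open Polynomial

/-- The polynomials `Q_k ∈ ℚ[X]`: `Q_1 = −(3X²+2)/8` and
`Q_{k+1} = (3/2)(k+1)·X·Q_k − (1/2)(X²−1)·Q_k′ − (1/2)∑_{j=1}^{k−1} Q_j·Q_{k−j}`. -/
noncomputable def QHer : ℕ → Polynomial ℚ
  | 0 => 0
  | 1 => C (-(1 : ℚ) / 8) * (3 * X ^ 2 + 2)
  | (k + 2) =>
      C (((3 : ℚ) / 2) * ((k : ℚ) + 2)) * X * QHer (k + 1)
        - C ((1 : ℚ) / 2) * (X ^ 2 - 1) * derivative (QHer (k + 1))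
        - C ((1 : ℚ) / 2) *
            ∑ j ∈ (Finset.Ico 1 (k + 1)).attach, QHer j.1 * QHer (k + 1 - j.1)
  decreasing_by
    all_goals try (have hj := Finset.mem_Ico.mp j.2)
    all_goals omega

/-!
With `Q_0 = −X/2`, the recursion says that `p(τ) = 1 + ∑ Q_k τ^{k+1}` solves the Riccati equation
`τ (δp + Xp) + p² = 1`, where the derivation `δ` acts on the coefficient of `τ^n` by
`P ↦ (X² − 1)P′ − 3nXP`; a second solution is `−p(−τ)`.

The equations for `P` are triangular in the monomials of a fixed parity, which gives existence,
uniqueness and parity. In the even case the degree is exact because the coefficient of `X^{k+1}` in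
`Q_k` is negative. In the odd case, where `P` has the largest possible degree `2q + 1 = 6k − 3`, its
leading coefficient is an explicit linear functional of `(X² − 1)P′ − (2q + 1)XP = Q_{2k−1}`.

To evaluate this functional, let `G = 1 / (p(τ) + p(−τ))`. A variation of the Riccati equation shows
that `(2k − 1)(X² − 1)Q_{2k−1}` is the coefficient of `τ^{2k}` in `G`, up to the image of a
polynomial of low degree, on which the functional vanishes. Moreover `G` satisfies a third-order
linear equation, and the coordinates of its solution in `X^{2j}(X² − 1)^l` are, up to explicit
factors, coefficients of the power series `sech t · √(t / tanh t) · (1 − tanh t / t)^j`. The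
functional sums these over `j` with binomial weights, which gives
`t / sinh t = ∑ B_n(1/2) (2t)^n / n!`.
-/

section WeightedDeriv

variable {R : Type*} [CommRing R]

/-- The operator `P ↦ (X² − 1)P′ − cXP`, that is
`(X² − 1)^{c/2+1} · d/dX ((X² − 1)^{−c/2} P)`; the weight `c` adds up in products. -/
noncomputable def weightedDeriv (c : R) : R[X] →ₗ[R] R[X] :=
  LinearMap.mulLeft R (X ^ 2 - 1) ∘ₗ derivative - LinearMap.mulLeft R (C c * X)

lemma weightedDeriv_apply (c : R) (P : R[X]) :
    weightedDeriv c P = (X ^ 2 - 1) * derivative P - C c * X * P := rfl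

lemma weightedDeriv_add_mul (a b : R) (P Q : R[X]) :
    weightedDeriv (a + b) (P * Q) = weightedDeriv a P * Q + P * weightedDeriv b Q := by
  simp only [weightedDeriv_apply, derivative_mul, C_add]
  ring

lemma weightedDeriv_add (a b : R) (P : R[X]) :
    weightedDeriv (a + b) P = weightedDeriv a P - C b * X * P := by
  simp only [weightedDeriv_apply, C_add]
  ring

lemma weightedDeriv_X_mul (c : R) (P : R[X]) :
    weightedDeriv c (X * P) = (X ^ 2 - 1) * P + X * weightedDeriv c P := by
  simp only [weightedDeriv_apply, derivative_mul, derivative_X]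
  ring

lemma weightedDeriv_add_two_mul (c : R) (P : R[X]) :
    weightedDeriv (c + 2) ((X ^ 2 - 1) * P) = (X ^ 2 - 1) * weightedDeriv c P := by
  simp only [weightedDeriv_apply, derivative_mul, derivative_sub, derivative_X_sq,
    derivative_one, C_add, C_ofNat]
  ring

lemma weightedDeriv_X_pow_succ (c : R) (m : ℕ) :
    weightedDeriv c (X ^ (m + 1)) = C (m + 1 - c) * X ^ (m + 2) - C (m + 1 : R) * X ^ m := by
  simp only [weightedDeriv_apply, derivative_X_pow, Nat.add_sub_cancel, Nat.cast_add,
    Nat.cast_one, C_add, C_sub, C_1]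
  ring

lemma coeff_zero_weightedDeriv (c : R) (P : R[X]) : (weightedDeriv c P).coeff 0 = -P.coeff 1 := by
  simp [weightedDeriv_apply, sub_mul, mul_assoc, coeff_derivative, mul_coeff_zero]

lemma coeff_succ_weightedDeriv (c : R) (P : R[X]) (n : ℕ) :
    (weightedDeriv c P).coeff (n + 1) = (n - c) * P.coeff n - (n + 2) * P.coeff (n + 2) := by
  have h : weightedDeriv c P = X * (X * derivative P) - derivative P - C c * (X * P) := by
    rw [weightedDeriv_apply]; ring
  rw [h, coeff_sub, coeff_sub, coeff_X_mul, coeff_C_mul, coeff_X_mul, coeff_derivative]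
  cases n with
  | zero => rw [coeff_X_mul_zero]; push_cast; ring
  | succ n => rw [coeff_X_mul, coeff_derivative]; push_cast; ring

lemma eq_zero_of_weightedDeriv_eq_zero [NoZeroDivisors R] {c : R} {P : R[X]}
    (h : weightedDeriv c P = 0) (hc : (P.natDegree : R) ≠ c) : P = 0 := by
  have hcoeff := coeff_succ_weightedDeriv c P P.natDegree
  rw [h, coeff_zero, coeff_eq_zero_of_natDegree_lt (by lia : P.natDegree < P.natDegree + 2),
    mul_zero, sub_zero] at hcoeff
  exact leadingCoeff_eq_zero.mp
    ((mul_eq_zero.mp hcoeff.symm).resolve_left (sub_ne_zero.mpr hc))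

end WeightedDeriv

section ParityDegreeLE

variable (R : Type*) [CommRing R]

/-- The polynomials of degree at most `n` that have the parity of `n`: only the monomials
`X ^ n, X ^ (n - 2), …` occur. -/
def parityDegreeLE (n : ℕ) : Submodule R R[X] where
  carrier := {P | ∀ m, P.coeff m ≠ 0 → m ≤ n ∧ m % 2 = n % 2}
  zero_mem' m hm := absurd (coeff_zero m) hm
  add_mem' {P Q} hP hQ m hm := by
    by_cases h : P.coeff m = 0
    · exact hQ m (by simpa [h] using hm)
    · exact hP m h
  smul_mem' a P hP m hm := hP m fun h ↦ hm (by rw [coeff_smul, h, smul_zero])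

variable {R} {n m : ℕ} {P Q : R[X]}

lemma X_pow_mem_parityDegreeLE (n : ℕ) : (X ^ n : R[X]) ∈ parityDegreeLE R n := by
  intro m hm
  rw [coeff_X_pow] at hm
  obtain rfl : m = n := by_contra fun h ↦ hm (if_neg h)
  exact ⟨le_rfl, rfl⟩

lemma X_mem_parityDegreeLE : (X : R[X]) ∈ parityDegreeLE R 1 := by
  simpa using X_pow_mem_parityDegreeLE (R := R) 1

lemma one_mem_parityDegreeLE : (1 : R[X]) ∈ parityDegreeLE R 0 := by
  simpa using X_pow_mem_parityDegreeLE (R := R) 0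

lemma parityDegreeLE_mono (h : n ≤ m) (hparity : n % 2 = m % 2) :
    parityDegreeLE R n ≤ parityDegreeLE R m :=
  fun _ hP i hi ↦ ⟨(hP i hi).1.trans h, (hP i hi).2.trans hparity⟩

lemma mul_mem_parityDegreeLE (hP : P ∈ parityDegreeLE R n) (hQ : Q ∈ parityDegreeLE R m) :
    P * Q ∈ parityDegreeLE R (n + m) := by
  intro i hi
  rw [coeff_mul] at hi
  obtain ⟨⟨a, b⟩, hab, h⟩ := Finset.exists_ne_zero_of_sum_ne_zero hi
  have ha := hP a (left_ne_zero_of_mul h)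
  have hb := hQ b (right_ne_zero_of_mul h)
  have := Finset.HasAntidiagonal.mem_antidiagonal.mp hab
  lia

lemma pow_mem_parityDegreeLE (i : ℕ) (hP : P ∈ parityDegreeLE R n) :
    P ^ i ∈ parityDegreeLE R (i * n) := by
  induction i with
  | zero => simpa using one_mem_parityDegreeLE
  | succ i ih => simpa only [pow_succ, add_one_mul] using mul_mem_parityDegreeLE ih hP

lemma C_mul_mem {S : Submodule R R[X]} (a : R) (hP : P ∈ S) : C a * P ∈ S :=
  smul_eq_C_mul (R := R) a ▸ S.smul_mem a hP

lemma X_sq_sub_one_mem_parityDegreeLE : (X ^ 2 - 1 : R[X]) ∈ parityDegreeLE R 2 :=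
  sub_mem (X_pow_mem_parityDegreeLE 2)
    (parityDegreeLE_mono (Nat.zero_le 2) rfl one_mem_parityDegreeLE)

lemma coeff_eq_zero_of_mem_parityDegreeLE (hP : P ∈ parityDegreeLE R n) (h : n < m) :
    P.coeff m = 0 :=
  by_contra fun hm ↦ (hP m hm).1.not_gt h

lemma natDegree_le_of_mem_parityDegreeLE (hP : P ∈ parityDegreeLE R n) : P.natDegree ≤ n :=
  natDegree_le_iff_coeff_eq_zero.mpr fun _ ↦ coeff_eq_zero_of_mem_parityDegreeLE hP

lemma parityDegreeLE_le_degreeLT (h : n < m) : parityDegreeLE R n ≤ degreeLT R m :=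
  fun _ hP ↦ mem_degreeLT.mpr <| (degree_lt_iff_coeff_zero _ _).mpr fun _ hi ↦
    coeff_eq_zero_of_mem_parityDegreeLE hP (h.trans_le hi)

lemma degree_eq_of_mem_parityDegreeLE (hP : P ∈ parityDegreeLE R n) (h : P.coeff n ≠ 0) :
    P.degree = n :=
  degree_eq_of_le_of_coeff_ne_zero
    (natDegree_le_iff_degree_le.mp (natDegree_le_of_mem_parityDegreeLE hP)) h

lemma weightedDeriv_mem_parityDegreeLE (c : R) (hP : P ∈ parityDegreeLE R n) :
    weightedDeriv c P ∈ parityDegreeLE R (n + 1) := by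
  rintro (_ | m) hm
  · rw [coeff_zero_weightedDeriv, neg_ne_zero] at hm
    have := hP 1 hm
    lia
  · rw [coeff_succ_weightedDeriv] at hm
    by_cases h : P.coeff m = 0
    · rw [h, mul_zero, zero_sub, neg_ne_zero] at hm
      have := hP _ (right_ne_zero_of_mul hm)
      lia
    · have := hP m h
      lia

lemma comp_neg_X_of_mem_parityDegreeLE (hP : P ∈ parityDegreeLE R n) :
    P.comp (-X) = C ((-1) ^ n) * P := by
  ext m
  rw [show (-X : R[X]) = C (-1) * X by simp, comp_C_mul_X_coeff, coeff_C_mul, mul_comm]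
  by_cases h : P.coeff m = 0
  · rw [h, mul_zero, mul_zero]
  · rw [neg_one_pow_eq_pow_mod_two, (hP m h).2, ← neg_one_pow_eq_pow_mod_two]

lemma comp_neg_X_of_mem_parityDegreeLE_of_even (hP : P ∈ parityDegreeLE R n) (hn : Even n) :
    P.comp (-X) = P := by
  rw [comp_neg_X_of_mem_parityDegreeLE hP, hn.neg_one_pow, C_1, one_mul]

lemma comp_neg_X_of_mem_parityDegreeLE_of_odd (hP : P ∈ parityDegreeLE R n) (hn : Odd n) :
    P.comp (-X) = -P := by
  rw [comp_neg_X_of_mem_parityDegreeLE hP, hn.neg_one_pow, C_neg, C_1, neg_one_mul]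

lemma parityDegreeLE_le_of_X_pow_mem {S : Submodule R R[X]}
    (h : ∀ m ≤ n, m % 2 = n % 2 → X ^ m ∈ S) : parityDegreeLE R n ≤ S := by
  intro P hP
  rw [P.as_sum_support_C_mul_X_pow]
  refine sum_mem fun m hm ↦ ?_
  obtain ⟨hle, hmod⟩ := hP m (mem_support_iff.mp hm)
  exact C_mul_mem _ (h m hle hmod)

variable {K : Type*} [Field K] [CharZero K]

lemma parityDegreeLE_le_map_weightedDeriv_of_even (q : ℕ) :
    parityDegreeLE K (2 * q) ≤
      (parityDegreeLE K (2 * q + 1)).map (weightedDeriv (2 * q + 1 : K)) := by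
  set S := (parityDegreeLE K (2 * q + 1)).map (weightedDeriv (2 * q + 1 : K))
  have descend {m d : ℕ} (hm : m + 2 * d = 2 * q)
      (h : C (m + 1 - (2 * q + 1 : K)) * X ^ (m + 2) ∈ S) : X ^ m ∈ S := by
    have hL : weightedDeriv (2 * q + 1 : K) (X ^ (m + 1)) ∈ S := Submodule.mem_map_of_mem
      (parityDegreeLE_mono (by lia) (by lia) (X_pow_mem_parityDegreeLE (m + 1)))
    have := sub_mem h (weightedDeriv_X_pow_succ (2 * q + 1 : K) m ▸ hL)
    rw [sub_sub_cancel, ← smul_eq_C_mul] at this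
    exact (S.smul_mem_iff m.cast_add_one_ne_zero).mp this
  suffices h : ∀ d m, m + 2 * d = 2 * q → X ^ m ∈ S from
    parityDegreeLE_le_of_X_pow_mem fun m hm hmod ↦ h ((2 * q - m) / 2) m (by lia)
  intro d
  induction d with
  | zero =>
    rintro m rfl
    exact descend (d := 0) (by simp) (by simp)
  | succ d ih =>
    intro m hm
    exact descend hm (C_mul_mem _ (ih (m + 2) (by lia)))

lemma parityDegreeLE_le_map_weightedDeriv_of_odd {c q : ℕ} (hq : 2 * q < c) :
    parityDegreeLE K (2 * q + 1) ≤ (parityDegreeLE K (2 * q)).map (weightedDeriv (c : K)) := by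
  set S := (parityDegreeLE K (2 * q)).map (weightedDeriv (c : K))
  have hL {m : ℕ} (hm : m ≤ 2 * q) (hmod : m % 2 = 0) : weightedDeriv (c : K) (X ^ m) ∈ S :=
    Submodule.mem_map_of_mem (parityDegreeLE_mono hm (by lia) (X_pow_mem_parityDegreeLE m))
  suffices h : ∀ j ≤ q, X ^ (2 * j + 1) ∈ S from
    parityDegreeLE_le_of_X_pow_mem fun m hm hmod ↦ by
      simpa [show 2 * (m / 2) + 1 = m by lia] using h (m / 2) (by lia)
  intro j hj
  induction j with
  | zero =>
    have h := hL (m := 0) (by lia) rfl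
    have hc : (-c : K) ≠ 0 := neg_ne_zero.mpr (Nat.cast_ne_zero.mpr (by lia))
    rw [pow_zero, weightedDeriv_apply, derivative_one, mul_zero, zero_sub, mul_one, ← neg_mul,
      ← C_neg, ← smul_eq_C_mul, S.smul_mem_iff hc] at h
    simpa using h
  | succ j ih =>
    have h := hL (m := 2 * j + 1 + 1) (by lia) (by lia)
    have hc : ((2 * j + 1 : ℕ) + 1 - c : K) ≠ 0 := by
      rw [sub_ne_zero]
      exact_mod_cast (by lia : 2 * j + 1 + 1 ≠ c)
    rw [weightedDeriv_X_pow_succ] at h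
    have := add_mem h (C_mul_mem ((2 * j + 1 : ℕ) + 1 : K) (ih (by lia)))
    rwa [sub_add_cancel, ← smul_eq_C_mul, S.smul_mem_iff hc] at this

end ParityDegreeLE

section LeadFunctional

open Finset.HasAntidiagonal (antidiagonal mem_antidiagonal)

/-- The rising factorial `(1/2)(3/2)⋯(n − 1/2)`. -/
noncomputable def halfPochhammer (n : ℕ) : ℚ := (ascPochhammer ℚ n).eval (1 / 2)

lemma halfPochhammer_zero : halfPochhammer 0 = 1 := by simp [halfPochhammer]

lemma halfPochhammer_succ (n : ℕ) : halfPochhammer (n + 1) = halfPochhammer n * (n + 1 / 2) := by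
  rw [halfPochhammer, ascPochhammer_succ_eval, add_comm (1 / 2 : ℚ), halfPochhammer]

lemma halfPochhammer_pos (n : ℕ) : 0 < halfPochhammer n := ascPochhammer_pos n _ (by norm_num)

/-- The coefficients of `leadFunctional`, where `2d` is the distance from the top degree and `2j`
the degree of the monomial. -/
noncomputable def leadWeight (d j : ℕ) : ℚ :=
  (-1) ^ (d + 1) * d.factorial * halfPochhammer j / (2 * halfPochhammer (d + j + 1))

lemma leadWeight_zero_left (j : ℕ) : leadWeight 0 j * (2 * j + 1) = -1 := by
  have := (halfPochhammer_pos j).ne'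
  rw [leadWeight, zero_add j, halfPochhammer_succ, show (j + 1 / 2 : ℚ) = (2 * j + 1) / 2 by ring]
  field_simp
  simp

lemma leadWeight_succ_left (d j : ℕ) :
    leadWeight (d + 1) j * (2 * j + 1) = -2 * (d + 1) * leadWeight d (j + 1) := by
  have := (halfPochhammer_pos (d + j + 2)).ne'
  rw [leadWeight, leadWeight, show d + 1 + j + 1 = d + j + 2 by ring,
    show d + (j + 1) + 1 = d + j + 2 by ring, halfPochhammer_succ j, Nat.factorial_succ]
  push_cast
  field_simp
  ring

lemma leadWeight_succ_right_sub (d j : ℕ) :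
    leadWeight d (j + 1) - leadWeight (d + 1) j = leadWeight d j := by
  have := (halfPochhammer_pos (d + j + 1)).ne'
  rw [leadWeight, leadWeight, leadWeight, show d + 1 + j + 1 = d + j + 1 + 1 by ring,
    show d + (j + 1) + 1 = d + j + 1 + 1 by ring, halfPochhammer_succ j,
    halfPochhammer_succ (d + j + 1), Nat.factorial_succ]
  push_cast
  field_simp
  ring

/-- The functional that recovers the coefficient of `X ^ (2q + 1)` in `P` from
`weightedDeriv (2q + 1) P`, see `leadFunctional_weightedDeriv`. -/
noncomputable def leadFunctional (q : ℕ) : ℚ[X] →ₗ[ℚ] ℚ :=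
  ∑ dj ∈ antidiagonal q, leadWeight dj.1 dj.2 • lcoeff ℚ (2 * dj.2)

lemma leadFunctional_apply (q : ℕ) (P : ℚ[X]) :
    leadFunctional q P = ∑ dj ∈ antidiagonal q, leadWeight dj.1 dj.2 * P.coeff (2 * dj.2) := by
  simp [leadFunctional]

lemma leadFunctional_weightedDeriv (q : ℕ) (P : ℚ[X]) :
    leadFunctional q (weightedDeriv (2 * q + 1 : ℚ) P) = P.coeff (2 * q + 1) := by
  set f : ℕ → ℕ → ℚ := fun d j ↦ leadWeight d j * (2 * j + 1) * P.coeff (2 * j + 1) with hf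
  have hzero : leadWeight q 0 * (weightedDeriv (2 * q + 1 : ℚ) P).coeff 0 = -f q 0 := by
    rw [coeff_zero_weightedDeriv]
    simp [hf]
  have hsucc {d j : ℕ} (h : d + j + 1 = q) :
      leadWeight d (j + 1) * (weightedDeriv (2 * q + 1 : ℚ) P).coeff (2 * (j + 1)) =
        f (d + 1) j - f d (j + 1) := by
    rw [show 2 * (j + 1) = 2 * j + 1 + 1 by ring, coeff_succ_weightedDeriv, ← h]
    simp only [hf, leadWeight_succ_left]
    push_cast
    ring_nf
  have hlast : f 0 q = -P.coeff (2 * q + 1) := by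
    simp only [hf, leadWeight_zero_left, neg_one_mul]
  rw [leadFunctional_apply]
  cases q with
  | zero => simpa [hlast] using hzero
  | succ q =>
    rw [Finset.Nat.sum_antidiagonal_succ', mul_zero, hzero,
      Finset.sum_congr rfl fun dj hdj ↦
        hsucc (congrArg Nat.succ (mem_antidiagonal.mp hdj)),
      Finset.sum_sub_distrib]
    have h₁ := Finset.Nat.sum_antidiagonal_succ (f := fun dj ↦ f dj.1 dj.2) (n := q)
    have h₂ := Finset.Nat.sum_antidiagonal_succ' (f := fun dj ↦ f dj.1 dj.2) (n := q)
    linarith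

lemma leadFunctional_X_sq_sub_one_mul {q : ℕ} {P : ℚ[X]} (hP : P.coeff (2 * q + 2) = 0) :
    leadFunctional (q + 1) ((X ^ 2 - 1) * P) = leadFunctional q P := by
  have hsq : leadFunctional (q + 1) (X ^ 2 * P) =
      ∑ dj ∈ antidiagonal q, leadWeight dj.1 (dj.2 + 1) * P.coeff (2 * dj.2) := by
    rw [leadFunctional_apply, Finset.Nat.sum_antidiagonal_succ']
    simp [mul_add, coeff_X_pow_mul']
  have hone : leadFunctional (q + 1) P =
      ∑ dj ∈ antidiagonal q, leadWeight (dj.1 + 1) dj.2 * P.coeff (2 * dj.2) := by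
    rw [leadFunctional_apply, Finset.Nat.sum_antidiagonal_succ]
    simp [mul_add, hP]
  rw [sub_mul, one_mul, map_sub, hsq, hone, ← Finset.sum_sub_distrib, leadFunctional_apply]
  simp only [← sub_mul, leadWeight_succ_right_sub]

lemma leadFunctional_X_pow_mul_X_sq_sub_one_pow (d j l : ℕ) :
    leadFunctional (d + j + l) (X ^ (2 * j) * (X ^ 2 - 1) ^ l) = leadWeight d j := by
  induction l with
  | zero =>
    rw [leadFunctional_apply, Finset.sum_eq_single (d, j)]
    · simp
    · rintro ⟨a, b⟩ hab hne
      have hbj : b ≠ j := by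
        rintro rfl
        exact hne (by simpa using hab)
      simp [coeff_X_pow, hbj]
    · simp
  | succ l ih =>
    have hmem : (X ^ (2 * j) * (X ^ 2 - 1) ^ l : ℚ[X]).coeff (2 * (d + j + l) + 2) = 0 :=
      coeff_eq_zero_of_mem_parityDegreeLE (mul_mem_parityDegreeLE (X_pow_mem_parityDegreeLE _)
        (pow_mem_parityDegreeLE l X_sq_sub_one_mem_parityDegreeLE)) (by lia)
    rw [← add_assoc, pow_succ', mul_left_comm, leadFunctional_X_sq_sub_one_mul hmem, ih]

end LeadFunctional

section RiccatiSequence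

open Finset.HasAntidiagonal (antidiagonal mem_antidiagonal)

/-- The sequence `Q_k` completed by `Q_0 = −X/2`, which makes its recursion uniform. -/
noncomputable def riccatiCoeff : ℕ → ℚ[X]
  | 0 => C (-1 / 2) * X
  | n + 1 => QHer (n + 1)

lemma two_mul_QHer_add_two (n : ℕ) :
    2 * QHer (n + 2) = -(weightedDeriv (3 * (n + 2) : ℚ) (QHer (n + 1)) +
      ∑ j ∈ Finset.Ico 1 (n + 1), QHer j * QHer (n + 1 - j)) := by
  have h2 : (2 : ℚ[X]) * C (1 / 2 : ℚ) = 1 := by rw [← C_ofNat, ← C_mul]; norm_num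
  have h3 : (2 : ℚ[X]) * C (3 / 2 * (n + 2) : ℚ) = C (3 * (n + 2) : ℚ) := by
    rw [← C_ofNat, ← C_mul]; ring_nf
  rw [QHer, Finset.sum_attach (Finset.Ico 1 (n + 1)) fun j ↦ QHer j * QHer (n + 1 - j),
    weightedDeriv_apply]
  linear_combination X * QHer (n + 1) * h3 - ((X ^ 2 - 1) * derivative (QHer (n + 1)) +
    ∑ j ∈ Finset.Ico 1 (n + 1), QHer j * QHer (n + 1 - j)) * h2

lemma two_mul_riccatiCoeff_succ (n : ℕ) :
    2 * riccatiCoeff (n + 1) = -(weightedDeriv (3 * n + 2 : ℚ) (riccatiCoeff n) +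
      ∑ ij ∈ antidiagonal n, riccatiCoeff ij.1 * riccatiCoeff ij.2) := by
  cases n with
  | zero =>
    have h2 : C (-1 / 2 : ℚ) = -4 * C (1 / 8) := by rw [← C_ofNat, ← C_neg, ← C_mul]; norm_num
    have h18 : C (-1 / 8 : ℚ) = -C (1 / 8) := by rw [← C_neg]; norm_num
    have h8 : 8 * C (1 / 8 : ℚ) = 1 := by rw [← C_ofNat, ← C_mul]; norm_num
    change 2 * QHer 1 = _
    rw [QHer, Finset.Nat.sum_antidiagonal_eq_sum_range_succ fun i j ↦
      riccatiCoeff i * riccatiCoeff j]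
    simp only [riccatiCoeff, weightedDeriv_apply, h2, h18]
    simp only [neg_mul, mul_neg, derivative_neg, derivative_mul, derivative_ofNat, zero_mul,
      derivative_C, mul_zero, add_zero, derivative_X, mul_one, zero_add, Nat.cast_zero, C_ofNat,
      sub_neg_eq_add, Finset.range_one, Nat.sub_zero,
      Finset.sum_singleton, neg_neg, neg_add_rev]
    linear_combination 2 * C (1 / 8 : ℚ) * X ^ 2 * h8
  | succ n =>
    rw [Finset.Nat.sum_antidiagonal_eq_sum_range_succ fun i j ↦ riccatiCoeff i * riccatiCoeff j,
      Finset.sum_range_succ, Finset.range_eq_Ico, Finset.sum_eq_sum_Ico_succ_bot (by lia),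
      Finset.sum_congr rfl fun j hj ↦ show _ = QHer j * QHer (n + 1 - j) from by
        obtain ⟨hj1, hjn⟩ := Finset.mem_Ico.mp hj
        rw [← Nat.sub_add_cancel hj1, show n + 1 - (j - 1 + 1) = n - j + 1 by lia]
        rfl]
    have h2 : (2 : ℚ[X]) * C (-1 / 2 : ℚ) = -1 := by rw [← C_ofNat, ← C_mul]; norm_num
    simp only [riccatiCoeff, Nat.sub_zero, Nat.sub_self, zero_add]
    rw [two_mul_QHer_add_two,
      show (3 * (n + 2) : ℚ) = 3 * (n + 1 : ℕ) + 2 + 1 by push_cast; ring, weightedDeriv_add, C_1]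
    linear_combination X * QHer (n + 1) * h2

lemma riccatiCoeff_mem_parityDegreeLE (n : ℕ) : riccatiCoeff n ∈ parityDegreeLE ℚ (n + 1) := by
  induction n using Nat.strong_induction_on with
  | _ n ih =>
    cases n with
    | zero => exact C_mul_mem _ X_mem_parityDegreeLE
    | succ n =>
      have hderiv := weightedDeriv_mem_parityDegreeLE (3 * n + 2 : ℚ) (ih n n.lt_succ_self)
      have hsum : ∑ ij ∈ antidiagonal n, riccatiCoeff ij.1 * riccatiCoeff ij.2 ∈
          parityDegreeLE ℚ (n + 2) := by
        refine sum_mem fun ij hij ↦ ?_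
        have hadd := mem_antidiagonal.mp hij
        exact (show ij.1 + 1 + (ij.2 + 1) = n + 2 by lia) ▸
          mul_mem_parityDegreeLE (ih _ (by lia)) (ih _ (by lia))
      have h := neg_mem (add_mem hderiv hsum)
      rw [← two_mul_riccatiCoeff_succ, ← C_ofNat, ← smul_eq_C_mul] at h
      exact (Submodule.smul_mem_iff _ two_ne_zero).mp h

lemma natDegree_riccatiCoeff_le (n : ℕ) : (riccatiCoeff n).natDegree ≤ n + 1 :=
  natDegree_le_of_mem_parityDegreeLE (riccatiCoeff_mem_parityDegreeLE n)

lemma coeff_riccatiCoeff_neg (n : ℕ) : (riccatiCoeff n).coeff (n + 1) < 0 := by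
  induction n using Nat.strong_induction_on with
  | _ n ih =>
    cases n with
    | zero => norm_num [riccatiCoeff]
    | succ n =>
      have hlead := coeff_succ_weightedDeriv (3 * n + 2 : ℚ) (riccatiCoeff n) (n + 1)
      rw [coeff_eq_zero_of_mem_parityDegreeLE (m := n + 1 + 2)
        (riccatiCoeff_mem_parityDegreeLE n) (by lia), mul_zero, sub_zero] at hlead
      have hlead_pos : 0 < (weightedDeriv (3 * n + 2 : ℚ) (riccatiCoeff n)).coeff (n + 1 + 1) := by
        rw [hlead]
        refine mul_pos_of_neg_of_neg ?_ (ih n n.lt_succ_self)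
        push_cast
        linarith [(n.cast_nonneg : (0 : ℚ) ≤ n)]
      have hsum : 0 ≤ (∑ ij ∈ antidiagonal n, riccatiCoeff ij.1 * riccatiCoeff ij.2).coeff
          (n + 1 + 1) := by
        rw [finsetSum_coeff]
        refine Finset.sum_nonneg fun ij hij ↦ ?_
        have hadd := mem_antidiagonal.mp hij
        rw [show n + 1 + 1 = ij.1 + 1 + (ij.2 + 1) by lia, coeff_mul_add_eq_of_natDegree_le
          (natDegree_riccatiCoeff_le _) (natDegree_riccatiCoeff_le _)]
        exact (mul_pos_of_neg_of_neg (ih _ (by lia)) (ih _ (by lia))).le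
      have h := congrArg (coeff · (n + 1 + 1)) (two_mul_riccatiCoeff_succ n)
      simp only [coeff_ofNat_mul, coeff_neg, coeff_add] at h
      linarith

end RiccatiSequence

section GradedSeries

open Finset.HasAntidiagonal (antidiagonal mem_antidiagonal)
open scoped PowerSeries

variable {R : Type*} [CommRing R]

/-- The derivation of `R[X]⟦τ⟧` that acts on the coefficient of `τ ^ n` by `weightedDeriv (n * c)`:
it sends `X` to `X² − 1` and `τ` to `−c X τ`. -/
noncomputable def seriesDeriv (c : R) : Derivation R R[X]⟦X⟧ R[X]⟦X⟧ :=
  Derivation.mk'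
    { toFun := fun F ↦ PowerSeries.mk fun n ↦ weightedDeriv (n * c) (PowerSeries.coeff n F)
      map_add' := fun F G ↦ by ext1 n; simp
      map_smul' := fun a F ↦ by ext1 n; simp }
    fun F G ↦ by
      ext1 n
      simp only [LinearMap.coe_mk, AddHom.coe_mk, PowerSeries.coeff_mk, smul_eq_mul, map_add,
        mul_comm G, PowerSeries.coeff_mul, map_sum, ← Finset.sum_add_distrib]
      refine Finset.sum_congr rfl fun ij hij ↦ ?_
      rw [← mem_antidiagonal.mp hij, Nat.cast_add, add_mul, weightedDeriv_add_mul, add_comm]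

lemma coeff_seriesDeriv (c : R) (F : R[X]⟦X⟧) (n : ℕ) :
    PowerSeries.coeff n (seriesDeriv c F) = weightedDeriv (n * c) (PowerSeries.coeff n F) :=
  PowerSeries.coeff_mk n fun n ↦ weightedDeriv (n * c) (PowerSeries.coeff n F)

lemma coeff_seriesDeriv_sub (c e : R) (F : R[X]⟦X⟧) (n : ℕ) :
    PowerSeries.coeff n (seriesDeriv c F - PowerSeries.C (C e * X) * F) =
      weightedDeriv (n * c + e) (PowerSeries.coeff n F) := by
  rw [map_sub, coeff_seriesDeriv, PowerSeries.coeff_C_mul, weightedDeriv_add]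

lemma seriesDeriv_C (c : R) (P : R[X]) :
    seriesDeriv c (PowerSeries.C P) = PowerSeries.C ((X ^ 2 - 1) * derivative P) := by
  ext1 n
  rw [coeff_seriesDeriv, PowerSeries.coeff_C, PowerSeries.coeff_C]
  split_ifs with h <;> simp [h, weightedDeriv_apply]

lemma seriesDeriv_X (c : R) :
    seriesDeriv c PowerSeries.X = -(PowerSeries.C (C c * X) * PowerSeries.X) := by
  ext1 n
  rw [coeff_seriesDeriv, map_neg, PowerSeries.coeff_C_mul, PowerSeries.coeff_X]
  split_ifs with h <;> simp [h, weightedDeriv_apply]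

variable (R) in
/-- The Euler derivation `τ d/dτ` of `R[X]⟦τ⟧`. -/
noncomputable def eulerDeriv : Derivation R R[X]⟦X⟧ R[X]⟦X⟧ :=
  Derivation.mk'
    { toFun := fun F ↦ PowerSeries.mk fun n ↦ n • PowerSeries.coeff n F
      map_add' := fun F G ↦ by ext1 n; simp
      map_smul' := fun a F ↦ by ext1 n; simp }
    fun F G ↦ by
      ext1 n
      simp only [LinearMap.coe_mk, AddHom.coe_mk, PowerSeries.coeff_mk, smul_eq_mul, map_add,
        mul_comm G, PowerSeries.coeff_mul, Finset.smul_sum, ← Finset.sum_add_distrib]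
      refine Finset.sum_congr rfl fun ij hij ↦ ?_
      rw [← mem_antidiagonal.mp hij, add_smul, smul_mul_assoc, mul_smul_comm, add_comm]

lemma coeff_eulerDeriv (F : R[X]⟦X⟧) (n : ℕ) :
    PowerSeries.coeff n (eulerDeriv R F) = n • PowerSeries.coeff n F :=
  PowerSeries.coeff_mk n fun n ↦ n • PowerSeries.coeff n F

lemma eulerDeriv_seriesDeriv (c : R) (F : R[X]⟦X⟧) :
    eulerDeriv R (seriesDeriv c F) = seriesDeriv c (eulerDeriv R F) := by
  ext1 n
  simp only [coeff_eulerDeriv, coeff_seriesDeriv, map_nsmul]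

lemma eulerDeriv_C (P : R[X]) : eulerDeriv R (PowerSeries.C P) = 0 := by
  ext1 n
  cases n <;> simp [coeff_eulerDeriv, PowerSeries.coeff_succ_C]

lemma eulerDeriv_X : eulerDeriv R PowerSeries.X = PowerSeries.X := by
  ext1 n
  rw [coeff_eulerDeriv, PowerSeries.coeff_X]
  split_ifs with h <;> simp [h]

lemma coeff_evalNegHom (F : R[X]⟦X⟧) (n : ℕ) :
    PowerSeries.coeff n (PowerSeries.evalNegHom F) = (-1 : R) ^ n • PowerSeries.coeff n F := by
  rw [PowerSeries.evalNegHom, PowerSeries.coeff_rescale, smul_eq_C_mul, C_pow, C_neg, C_1]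

lemma evalNegHom_seriesDeriv (c : R) (F : R[X]⟦X⟧) :
    PowerSeries.evalNegHom (seriesDeriv c F) = seriesDeriv c (PowerSeries.evalNegHom F) := by
  ext1 n
  simp only [coeff_evalNegHom, coeff_seriesDeriv, map_smul]

variable (R) in
/-- The power series whose `n`-th coefficient has degree at most `n + d` and the parity of
`n + d`. -/
def gradedSeries (d : ℕ) : Submodule R R[X]⟦X⟧ where
  carrier := {F | ∀ n, PowerSeries.coeff n F ∈ parityDegreeLE R (n + d)}
  zero_mem' n := by simp
  add_mem' hF hG n := by simpa using add_mem (hF n) (hG n)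
  smul_mem' a F hF n := by
    simpa [PowerSeries.coeff_smul] using (parityDegreeLE R (n + d)).smul_mem a (hF n)

variable {d e : ℕ} {F G : R[X]⟦X⟧}

lemma mul_mem_gradedSeries (hF : F ∈ gradedSeries R d) (hG : G ∈ gradedSeries R e) :
    F * G ∈ gradedSeries R (d + e) := by
  intro n
  rw [PowerSeries.coeff_mul]
  refine sum_mem fun ij hij ↦ ?_
  have hadd := mem_antidiagonal.mp hij
  exact (show ij.1 + d + (ij.2 + e) = n + (d + e) by lia) ▸
    mul_mem_parityDegreeLE (hF ij.1) (hG ij.2)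

lemma C_mem_gradedSeries {P : R[X]} (hP : P ∈ parityDegreeLE R d) :
    PowerSeries.C P ∈ gradedSeries R d := by
  intro n
  rw [PowerSeries.coeff_C]
  split_ifs with h
  · simpa [h] using hP
  · exact zero_mem _

lemma gradedSeries_le_add_two (d : ℕ) : gradedSeries R d ≤ gradedSeries R (d + 2) :=
  fun _ hF n ↦ parityDegreeLE_mono (by lia) (by lia) (hF n)

lemma seriesDeriv_mem_gradedSeries (c : R) (hF : F ∈ gradedSeries R d) :
    seriesDeriv c F ∈ gradedSeries R (d + 1) := fun n ↦ by
  rw [coeff_seriesDeriv]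
  exact weightedDeriv_mem_parityDegreeLE _ (hF n)

lemma eulerDeriv_mem_gradedSeries (hF : F ∈ gradedSeries R d) :
    eulerDeriv R F ∈ gradedSeries R d := fun n ↦ by
  rw [coeff_eulerDeriv]
  exact nsmul_mem (hF n) n

lemma evalNegHom_mem_gradedSeries (hF : F ∈ gradedSeries R d) :
    PowerSeries.evalNegHom F ∈ gradedSeries R d := fun n ↦ by
  rw [coeff_evalNegHom]
  exact (parityDegreeLE R (n + d)).smul_mem _ (hF n)

lemma mem_gradedSeries_of_mul_eq_one (hF : F ∈ gradedSeries R 0) (h : F * G = 1) :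
    G ∈ gradedSeries R 0 := by
  set a := (PowerSeries.coeff 0 F).coeff 0
  set b := (PowerSeries.coeff 0 G).coeff 0
  have hF₀ : PowerSeries.coeff 0 F = C a :=
    eq_C_of_natDegree_eq_zero (Nat.le_zero.mp (natDegree_le_of_mem_parityDegreeLE (hF 0)))
  have hFG₀ : PowerSeries.coeff 0 F * PowerSeries.coeff 0 G = 1 := by
    simpa using congrArg (PowerSeries.coeff 0) h
  have hba : C b * C a = 1 := by
    have := congrArg (coeff · 0) hFG₀
    simp only [mul_coeff_zero, coeff_one_zero] at this
    rw [← C_mul, mul_comm, this, C_1]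
  have hG (n : ℕ) : PowerSeries.coeff n G = C b * (PowerSeries.coeff n 1 -
      (PowerSeries.coeff n (F * G) - C a * PowerSeries.coeff n G)) := by
    linear_combination (-PowerSeries.coeff n G) * hba + C b * congrArg (PowerSeries.coeff n) h
  have hone : 1 ∈ gradedSeries R 0 := by
    simpa using C_mem_gradedSeries (R := R) one_mem_parityDegreeLE
  intro n
  induction n using Nat.strong_induction_on with
  | _ n ih =>
    rw [hG]
    refine C_mul_mem b (sub_mem (hone n) ?_)
    cases n with
    | zero => simp [← hF₀]
    | succ n =>
      rw [PowerSeries.coeff_mul, Finset.Nat.sum_antidiagonal_succ, hF₀, add_sub_cancel_left]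
      refine sum_mem fun ij hij ↦ ?_
      have hadd := mem_antidiagonal.mp hij
      exact (show ij.1 + 1 + ij.2 = n + 1 by lia) ▸
        mul_mem_parityDegreeLE (hF (ij.1 + 1)) (ih ij.2 (by lia))

end GradedSeries

section RiccatiEquation

variable {R A : Type*} [CommRing R] [CommRing A] [Algebra R A] {δ θ : Derivation R A A}
  {x τ p p₁ p₂ G : A}

lemma mul_deriv_of_mul_sub_eq_one (h₁ : τ * (δ p₁ + x * p₁) + p₁ ^ 2 = 1)
    (h₂ : τ * (δ p₂ + x * p₂) + p₂ ^ 2 = 1) (hG : G * (p₁ - p₂) = 1) :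
    τ * δ G = G * (p₁ + p₂ + x * τ) := by
  have hδG : G * (δ p₁ - δ p₂) + (p₁ - p₂) * δ G = 0 := by
    simpa using congrArg δ hG
  linear_combination (-τ * δ G + G * (p₁ + p₂ + x * τ)) * hG + τ * G * hδG - G ^ 2 * (h₁ - h₂)

/-- `G` is a product of two solutions of the second-order linear equation associated with the
Riccati equation, and such products satisfy a third-order linear equation. -/
lemma resolvent_equation [IsDomain A] (hτ₀ : τ ≠ 0) (hτ : δ τ = -(3 * x * τ))
    (h₁ : τ * (δ p₁ + x * p₁) + p₁ ^ 2 = 1) (h₂ : τ * (δ p₂ + x * p₂) + p₂ ^ 2 = 1)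
    (hG : G * (p₁ - p₂) = 1) {G₁ G₃ G₅ : A} (hG₁ : G₁ = δ G - x * G)
    (hG₃ : G₃ = δ G₁ - 3 * x * G₁) (hG₅ : G₅ = δ G₃ - 5 * x * G₃) :
    τ ^ 2 * G₅ = 4 * δ G := by
  have hδG := mul_deriv_of_mul_sub_eq_one h₁ h₂ hG
  have first : τ * G₁ = G * (p₁ + p₂) := by
    linear_combination τ * hG₁ + hδG
  have second : τ ^ 2 * G₃ = 2 * G * (1 + p₁ * p₂) := by
    have h := congrArg δ first
    simp only [Derivation.leibniz, map_add, smul_eq_mul, hτ] at h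
    linear_combination τ ^ 2 * hG₃ + τ * h + (p₁ + p₂) * hδG + G * (h₁ + h₂)
  have third : τ ^ 3 * G₅ = 4 * G * (p₁ + p₂ + x * τ) := by
    have h := congrArg δ second
    have hδ2 : δ 2 = 0 := by exact_mod_cast δ.map_natCast 2
    simp only [Derivation.leibniz, Derivation.leibniz_pow, map_add, smul_eq_mul, hτ, nsmul_eq_mul,
      Derivation.map_one_eq_zero, hδ2] at h
    linear_combination τ ^ 3 * hG₅ + τ * h + x * τ * second + 2 * (1 + p₁ * p₂) * hδG +
      2 * G * (p₂ * h₁ + p₁ * h₂)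
  refine mul_left_cancel₀ hτ₀ ?_
  linear_combination third - 4 * hδG

variable (δ θ x) in
/-- The combination of `p`, `δ p` and `θ p` that solves the linearisation at `p` of the Riccati
equation `τ (δ p + x p) + p² = 1` with a constant inhomogeneous term, after multiplication by
`x² − 1`; see `riccatiVariation_equation`. Here `θ` stands for the Euler derivation in `τ`. -/
def riccatiVariation (p : A) : A := -p - x * δ p - 2 * (x ^ 2 - 1) * θ p

lemma riccatiVariation_equation (hx : δ x = x ^ 2 - 1) (hτ : δ τ = -(3 * x * τ)) (hθx : θ x = 0)
    (hθτ : θ τ = τ) (hp : τ * (δ p + x * p) + p ^ 2 = 1) (hcomm : θ (δ p) = δ (θ p)) :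
    τ * (δ (riccatiVariation δ θ x p) - 2 * x * riccatiVariation δ θ x p) +
      (2 * p + x * τ) * riccatiVariation δ θ x p = -2 := by
  have hδp := congrArg δ hp
  have hθp := congrArg θ hp
  have hδ2 : δ 2 = 0 := by exact_mod_cast δ.map_natCast 2
  simp only [Derivation.leibniz, Derivation.leibniz_pow, map_add, smul_eq_mul, nsmul_eq_mul,
    Derivation.map_one_eq_zero, hx, hτ, hθx, hθτ, hcomm] at hδp hθp
  simp only [riccatiVariation, map_sub, map_neg, Derivation.leibniz, Derivation.leibniz_pow,
    smul_eq_mul, nsmul_eq_mul, Derivation.map_one_eq_zero, hδ2, hx]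
  linear_combination -2 * hp - x * hδp - 2 * (x ^ 2 - 1) * hθp

lemma sub_eq_of_variation_equation (h₁ : τ * (δ p₁ + x * p₁) + p₁ ^ 2 = 1)
    (h₂ : τ * (δ p₂ + x * p₂) + p₂ ^ 2 = 1) (hG : G * (p₁ - p₂) = 1) {T₁ T₂ : A}
    (hT₁ : τ * (δ T₁ - 2 * x * T₁) + (2 * p₁ + x * τ) * T₁ = -2)
    (hT₂ : τ * (δ T₂ - 2 * x * T₂) + (2 * p₂ + x * τ) * T₂ = -2) :
    T₁ - T₂ = -(4 * G + τ * (δ (G * (T₁ + T₂)) - 2 * x * (G * (T₁ + T₂)))) := by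
  have hδG := mul_deriv_of_mul_sub_eq_one h₁ h₂ hG
  rw [Derivation.leibniz, map_add, smul_eq_mul, smul_eq_mul]
  linear_combination G * (hT₁ + hT₂) - (T₁ - T₂) * hG + (T₁ + T₂) * hδG

end RiccatiEquation

section RiccatiSeries

open Finset.HasAntidiagonal (antidiagonal mem_antidiagonal)
open scoped PowerSeries

/-- The formal solution `1 − (X/2)τ + ∑ Q_k τ^{k+1}` of the Riccati equation
`riccatiSeries_equation`. -/
noncomputable def riccatiSeries : ℚ[X]⟦X⟧ := 1 + PowerSeries.X * PowerSeries.mk riccatiCoeff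

lemma coeff_succ_riccatiSeries (n : ℕ) :
    PowerSeries.coeff (n + 1) riccatiSeries = riccatiCoeff n := by
  simp [riccatiSeries, PowerSeries.coeff_succ_X_mul, PowerSeries.coeff_one]

lemma constantCoeff_riccatiSeries : PowerSeries.constantCoeff riccatiSeries = 1 := by
  simp [riccatiSeries]

lemma riccatiSeries_mem_gradedSeries : riccatiSeries ∈ gradedSeries ℚ 0 := by
  rintro (_ | n)
  · simpa [constantCoeff_riccatiSeries] using one_mem_parityDegreeLE
  · rw [coeff_succ_riccatiSeries]
    exact riccatiCoeff_mem_parityDegreeLE n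

lemma riccatiSeries_equation :
    PowerSeries.X * (seriesDeriv 3 riccatiSeries + PowerSeries.C X * riccatiSeries) +
      riccatiSeries ^ 2 = 1 := by
  set r : ℚ[X]⟦X⟧ := PowerSeries.mk riccatiCoeff with hr
  have hrec : 2 * r + PowerSeries.C X +
      PowerSeries.X * (seriesDeriv 3 r - PowerSeries.C (C 2 * X) * r + r * r) = 0 := by
    ext1 n
    cases n with
    | zero =>
      have h2 : C (-1 / 2 : ℚ) + C (-1 / 2) + 1 = 0 := by
        rw [← C_add, ← C_1, ← C_add]; norm_num
      simp only [two_mul, map_add, PowerSeries.coeff_zero_X_mul, PowerSeries.coeff_zero_C, hr,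
        PowerSeries.coeff_mk, riccatiCoeff, map_zero, add_zero]
      linear_combination X * h2
    | succ n =>
      rw [two_mul, map_add, map_add, map_add, PowerSeries.coeff_succ_X_mul, map_add,
        coeff_seriesDeriv_sub, PowerSeries.coeff_mul, PowerSeries.coeff_C,
        if_neg n.succ_ne_zero, mul_comm (n : ℚ)]
      simp only [hr, PowerSeries.coeff_mk, map_zero]
      linear_combination two_mul_riccatiCoeff_succ n
  rw [riccatiSeries, ← hr, map_add, Derivation.leibniz, seriesDeriv_X, Derivation.map_one_eq_zero]
  simp only [smul_eq_mul, map_mul, map_ofNat] at hrec ⊢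
  linear_combination PowerSeries.X * hrec

lemma evalNegHom_riccatiSeries_equation :
    PowerSeries.X * (seriesDeriv 3 (-PowerSeries.evalNegHom riccatiSeries) +
      PowerSeries.C X * -PowerSeries.evalNegHom riccatiSeries) +
      (-PowerSeries.evalNegHom riccatiSeries) ^ 2 = 1 := by
  have hC : PowerSeries.evalNegHom (PowerSeries.C (X : ℚ[X])) = PowerSeries.C X :=
    by ext1 n; cases n <;> simp [coeff_evalNegHom, PowerSeries.coeff_succ_C]
  have h := congrArg PowerSeries.evalNegHom riccatiSeries_equation
  simp only [map_add, map_mul, map_pow, map_one, PowerSeries.evalNegHom_X, hC,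
    evalNegHom_seriesDeriv] at h
  rw [map_neg]
  linear_combination h

lemma seriesDeriv_three_X :
    seriesDeriv (3 : ℚ) PowerSeries.X = -(3 * PowerSeries.C X * PowerSeries.X) := by
  rw [seriesDeriv_X, map_mul, C_ofNat, map_ofNat]

/-- The reciprocal of the difference `p(τ) + p(−τ)` of the two formal solutions of the Riccati
equation. -/
noncomputable def resolventSeries : ℚ[X]⟦X⟧ :=
  Ring.inverse (riccatiSeries + PowerSeries.evalNegHom riccatiSeries)

lemma constantCoeff_add_evalNegHom_riccatiSeries :
    PowerSeries.constantCoeff (riccatiSeries + PowerSeries.evalNegHom riccatiSeries) = 2 := by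
  rw [map_add, constantCoeff_riccatiSeries, ← PowerSeries.coeff_zero_eq_constantCoeff_apply,
    coeff_evalNegHom, PowerSeries.coeff_zero_eq_constantCoeff_apply, constantCoeff_riccatiSeries,
    pow_zero, one_smul, one_add_one_eq_two]

lemma resolventSeries_mul :
    resolventSeries * (riccatiSeries + PowerSeries.evalNegHom riccatiSeries) = 1 := by
  refine Ring.inverse_mul_cancel _ (PowerSeries.isUnit_iff_constantCoeff.mpr ?_)
  rw [constantCoeff_add_evalNegHom_riccatiSeries, ← C_ofNat]
  exact isUnit_C.mpr (isUnit_iff_ne_zero.mpr two_ne_zero)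

lemma coeff_zero_resolventSeries : PowerSeries.coeff 0 resolventSeries = C (1 / 2) := by
  have h := congrArg PowerSeries.constantCoeff resolventSeries_mul
  rw [map_mul, constantCoeff_add_evalNegHom_riccatiSeries, map_one] at h
  have h2 : (2 : ℚ[X]) * C (1 / 2 : ℚ) = 1 := by rw [← C_ofNat, ← C_mul]; norm_num
  rw [PowerSeries.coeff_zero_eq_constantCoeff_apply]
  linear_combination C (1 / 2 : ℚ) * h - PowerSeries.constantCoeff resolventSeries * h2

lemma resolventSeries_mem_gradedSeries : resolventSeries ∈ gradedSeries ℚ 0 :=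
  mem_gradedSeries_of_mul_eq_one (add_mem riccatiSeries_mem_gradedSeries
    (evalNegHom_mem_gradedSeries riccatiSeries_mem_gradedSeries))
    ((mul_comm _ _).trans resolventSeries_mul)

lemma weightedDeriv_coeff_resolventSeries (n : ℕ) :
    weightedDeriv (3 * n + 5 : ℚ) (weightedDeriv (3 * n + 3 : ℚ) (weightedDeriv (3 * n + 1 : ℚ)
      (PowerSeries.coeff n resolventSeries))) =
    4 * weightedDeriv (3 * n + 6 : ℚ) (PowerSeries.coeff (n + 2) resolventSeries) := by
  set G₁ := seriesDeriv (3 : ℚ) resolventSeries - PowerSeries.C (C 1 * X) * resolventSeries with hG₁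
  set G₃ := seriesDeriv (3 : ℚ) G₁ - PowerSeries.C (C 3 * X) * G₁ with hG₃
  set G₅ := seriesDeriv (3 : ℚ) G₃ - PowerSeries.C (C 5 * X) * G₃ with hG₅
  have h := resolvent_equation (δ := seriesDeriv (3 : ℚ)) PowerSeries.X_ne_zero
    seriesDeriv_three_X riccatiSeries_equation evalNegHom_riccatiSeries_equation
    (by rw [sub_neg_eq_add, resolventSeries_mul]) (G₁ := G₁) (G₃ := G₃) (G₅ := G₅)
    (by simp [hG₁]) (by rw [hG₃, map_mul, C_ofNat, map_ofNat])
    (by rw [hG₅, map_mul, C_ofNat, map_ofNat])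
  have hcoeff := congrArg (PowerSeries.coeff (n + 2)) h
  rw [PowerSeries.coeff_X_pow_mul, hG₅, coeff_seriesDeriv_sub, hG₃, coeff_seriesDeriv_sub, hG₁,
    coeff_seriesDeriv_sub, ← map_ofNat PowerSeries.C, PowerSeries.coeff_C_mul,
    coeff_seriesDeriv] at hcoeff
  simp only [mul_comm (3 : ℚ)]
  rw [Nat.cast_add, add_mul, Nat.cast_ofNat, show (2 * 3 : ℚ) = 6 by norm_num] at hcoeff
  exact hcoeff

lemma C_X_mem_gradedSeries : PowerSeries.C X ∈ gradedSeries ℚ 1 :=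
  C_mem_gradedSeries X_mem_parityDegreeLE

lemma seriesDeriv_C_X (c : ℚ) : seriesDeriv c (PowerSeries.C X) = PowerSeries.C X ^ 2 - 1 := by
  rw [seriesDeriv_C, derivative_X, mul_one, map_sub, map_pow, map_one]

/-- The operator `riccatiVariation` on `ℚ[X]⟦τ⟧`, which is linear and maps `riccatiSeries` and
`−riccatiSeries(−τ)` to solutions of the linearised equations `seriesVariation_equation`. -/
noncomputable def seriesVariation (F : ℚ[X]⟦X⟧) : ℚ[X]⟦X⟧ :=
  riccatiVariation (seriesDeriv (3 : ℚ)) (eulerDeriv ℚ) (PowerSeries.C X) F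

lemma seriesVariation_sub (F G : ℚ[X]⟦X⟧) :
    seriesVariation F - seriesVariation G = seriesVariation (F - G) := by
  simp only [seriesVariation, riccatiVariation, map_sub]
  ring

lemma seriesVariation_mem_gradedSeries {F : ℚ[X]⟦X⟧} (hF : F ∈ gradedSeries ℚ 0) :
    seriesVariation F ∈ gradedSeries ℚ 2 := by
  have hX2 : PowerSeries.C (X : ℚ[X]) ^ 2 - 1 ∈ gradedSeries ℚ 2 := by
    simpa using C_mem_gradedSeries (R := ℚ) X_sq_sub_one_mem_parityDegreeLE
  refine sub_mem (sub_mem (neg_mem (gradedSeries_le_add_two 0 hF)) ?_) ?_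
  · exact mul_mem_gradedSeries C_X_mem_gradedSeries (seriesDeriv_mem_gradedSeries 3 hF)
  · rw [mul_assoc, two_mul]
    have := mul_mem_gradedSeries hX2 (eulerDeriv_mem_gradedSeries hF)
    exact add_mem this this

lemma coeff_seriesVariation (F : ℚ[X]⟦X⟧) (n : ℕ) :
    PowerSeries.coeff n (seriesVariation F) =
      C (2 - 2 * n : ℚ) * ((X ^ 2 - 1) * PowerSeries.coeff n F) -
        weightedDeriv (3 * n - 1 : ℚ) (X * PowerSeries.coeff n F) := by
  have hF : seriesVariation F = -F - PowerSeries.C X * seriesDeriv 3 F -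
      PowerSeries.C (2 * (X ^ 2 - 1)) * eulerDeriv ℚ F := by
    simp only [seriesVariation, riccatiVariation, map_mul, map_sub, map_pow, map_one, map_ofNat]
  rw [hF, map_sub, map_sub, map_neg, PowerSeries.coeff_C_mul, PowerSeries.coeff_C_mul,
    coeff_seriesDeriv, coeff_eulerDeriv, nsmul_eq_mul, mul_comm (n : ℚ)]
  have hshift := weightedDeriv_add (3 * n - 1 : ℚ) 1 (X * PowerSeries.coeff n F)
  rw [sub_add_cancel, weightedDeriv_X_mul, C_1] at hshift
  rw [C_sub, C_mul, C_ofNat, ← C_eq_natCast, map_natCast]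
  linear_combination -hshift

lemma seriesVariation_equation {p : ℚ[X]⟦X⟧}
    (hp : PowerSeries.X * (seriesDeriv 3 p + PowerSeries.C X * p) + p ^ 2 = 1) :
    PowerSeries.X * (seriesDeriv 3 (seriesVariation p) -
      2 * PowerSeries.C X * seriesVariation p) +
      (2 * p + PowerSeries.C X * PowerSeries.X) * seriesVariation p = -2 :=
  riccatiVariation_equation (seriesDeriv_C_X 3) seriesDeriv_three_X (eulerDeriv_C X) eulerDeriv_X
    hp (eulerDeriv_seriesDeriv 3 p)

lemma exists_X_sq_sub_one_mul_riccatiCoeff_eq (k : ℕ) :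
    ∃ N ∈ parityDegreeLE ℚ (2 * k + 3),
      C (4 * (2 * k + 1) : ℚ) * ((X ^ 2 - 1) * riccatiCoeff (2 * k + 1)) =
        4 * PowerSeries.coeff (2 * k + 2) resolventSeries +
          weightedDeriv (6 * k + 5 : ℚ) N := by
  set Q := riccatiCoeff (2 * k + 1)
  set q := -PowerSeries.evalNegHom riccatiSeries
  set H := resolventSeries * (seriesVariation riccatiSeries + seriesVariation q)
  have hq : q ∈ gradedSeries ℚ 0 :=
    neg_mem (evalNegHom_mem_gradedSeries riccatiSeries_mem_gradedSeries)
  have hH : H ∈ gradedSeries ℚ 2 := by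
    simpa using mul_mem_gradedSeries resolventSeries_mem_gradedSeries
      (add_mem (seriesVariation_mem_gradedSeries riccatiSeries_mem_gradedSeries)
        (seriesVariation_mem_gradedSeries hq))
  have key : seriesVariation (riccatiSeries - q) = -(4 * resolventSeries + PowerSeries.X *
      (seriesDeriv 3 H - PowerSeries.C (C 2 * X) * H)) := by
    rw [← seriesVariation_sub, map_mul PowerSeries.C, C_ofNat, map_ofNat]
    exact sub_eq_of_variation_equation riccatiSeries_equation
      evalNegHom_riccatiSeries_equation (by rw [sub_neg_eq_add, resolventSeries_mul])
      (seriesVariation_equation riccatiSeries_equation)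
      (seriesVariation_equation evalNegHom_riccatiSeries_equation)
  have hD : PowerSeries.coeff (2 * k + 2) (riccatiSeries - q) = C 2 * Q := by
    rw [sub_neg_eq_add, map_add, coeff_evalNegHom, Even.neg_one_pow ⟨k + 1, by ring⟩, one_smul,
      coeff_succ_riccatiSeries, ← two_mul, C_ofNat]
  have hXQ : X * (C 2 * Q) ∈ parityDegreeLE ℚ (2 * k + 3) :=
    (show 1 + (2 * k + 1 + 1) = 2 * k + 3 by ring) ▸ mul_mem_parityDegreeLE X_mem_parityDegreeLE
      (C_mul_mem 2 (riccatiCoeff_mem_parityDegreeLE (2 * k + 1)))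
  refine ⟨PowerSeries.coeff (2 * k + 1) H - X * (C 2 * Q), sub_mem (hH _) hXQ, ?_⟩
  have hcoeff := congrArg (PowerSeries.coeff (2 * k + 1 + 1)) key
  rw [coeff_seriesVariation, hD, map_neg, map_add, PowerSeries.coeff_succ_X_mul,
    coeff_seriesDeriv_sub, ← map_ofNat PowerSeries.C, PowerSeries.coeff_C_mul] at hcoeff
  push_cast at hcoeff
  rw [show (2 * k + 1 : ℚ) * 3 + 2 = 6 * k + 5 by ring,
    show (3 * (2 * k + 1 + 1) - 1 : ℚ) = 6 * k + 5 by ring,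
    show (2 - 2 * (2 * k + 1 + 1) : ℚ) = -(2 * (2 * k + 1)) by ring, C_neg] at hcoeff
  rw [map_sub, show (4 * (2 * k + 1) : ℚ) = 2 * (2 * k + 1) * 2 by ring, C_mul]
  linear_combination -hcoeff

end RiccatiSeries

section EvenForm

open Finset.HasAntidiagonal (antidiagonal mem_antidiagonal)

/-- The form `∑_{j+l=k} (1/2)(3/2)⋯(n + j − 1/2) / j! · u_j · X^{2j} (X² − 1)^l`, as a function of
the sequence `u`. -/
noncomputable def evenForm (n k : ℕ) : (ℕ → ℚ) →ₗ[ℚ] ℚ[X] :=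
  ∑ jl ∈ antidiagonal k, (LinearMap.proj jl.1).smulRight
    (C (halfPochhammer (n + jl.1) / jl.1.factorial) * (X ^ (2 * jl.1) * (X ^ 2 - 1) ^ jl.2))

lemma evenForm_apply (n k : ℕ) (u : ℕ → ℚ) :
    evenForm n k u = ∑ jl ∈ antidiagonal k,
      C (halfPochhammer (n + jl.1) / jl.1.factorial * u jl.1) *
        (X ^ (2 * jl.1) * (X ^ 2 - 1) ^ jl.2) := by
  simp only [evenForm, LinearMap.sum_apply, LinearMap.smulRight_apply, LinearMap.proj_apply,
    smul_eq_C_mul, ← mul_assoc, ← C_mul, mul_comm (u _)]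

lemma evenForm_congr {n k : ℕ} {u v : ℕ → ℚ} (h : ∀ j, u j = v j) :
    evenForm n k u = evenForm n k v := congrArg _ (funext h)

lemma evenForm_mem_parityDegreeLE (n k : ℕ) (u : ℕ → ℚ) :
    evenForm n k u ∈ parityDegreeLE ℚ (2 * k) := by
  rw [evenForm_apply]
  refine sum_mem fun jl hjl ↦ C_mul_mem _ ?_
  rw [← mem_antidiagonal.mp hjl, mul_add, mul_comm 2 jl.2]
  exact mul_mem_parityDegreeLE (X_pow_mem_parityDegreeLE _)
    (pow_mem_parityDegreeLE _ X_sq_sub_one_mem_parityDegreeLE)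

lemma evenForm_succ_left (n k : ℕ) (u : ℕ → ℚ) :
    evenForm (n + 1) k u = evenForm n k fun j ↦ (n + j + 1 / 2) * u j := by
  rw [evenForm_apply, evenForm_apply]
  refine Finset.sum_congr rfl fun jl _ ↦ ?_
  rw [add_right_comm, halfPochhammer_succ]
  push_cast
  ring_nf

lemma X_sq_sub_one_mul_evenForm {n k : ℕ} {u : ℕ → ℚ} (hu : u (k + 1) = 0) :
    (X ^ 2 - 1) * evenForm n k u = evenForm n (k + 1) u := by
  rw [evenForm_apply, evenForm_apply, Finset.Nat.sum_antidiagonal_succ', Finset.mul_sum]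
  simp only [hu, mul_zero, C_0, zero_mul, zero_add]
  exact Finset.sum_congr rfl fun jl _ ↦ by ring

lemma factorial_succ_div_mul (a b : ℚ) (j : ℕ) :
    a / (j + 1).factorial * ((j + 1 : ℕ) * b) = a / j.factorial * b := by
  have := j.factorial_ne_zero
  rw [Nat.factorial_succ]
  push_cast
  field_simp

lemma X_sq_mul_evenForm (n k : ℕ) (u : ℕ → ℚ) :
    X ^ 2 * evenForm (n + 1) k u = evenForm n (k + 1) fun j ↦ j * u (j - 1) := by
  rw [evenForm_apply, evenForm_apply, Finset.Nat.sum_antidiagonal_succ, Finset.mul_sum]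
  simp only [Nat.cast_zero, zero_mul, mul_zero, C_0, zero_add, Nat.add_sub_cancel,
    factorial_succ_div_mul, add_right_comm n 1, ← add_assoc]
  exact Finset.sum_congr rfl fun jl _ ↦ by ring

lemma weightedDeriv_X_pow_mul_X_sq_sub_one_pow (c : ℚ) (j l : ℕ) :
    weightedDeriv (c + 2 * l) (X ^ (2 * j) * (X ^ 2 - 1) ^ l) =
      X * (C (2 * j : ℚ) * (X ^ (2 * (j - 1)) * (X ^ 2 - 1) ^ (l + 1)) -
        C c * (X ^ (2 * j) * (X ^ 2 - 1) ^ l)) := by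
  induction l with
  | zero =>
    cases j with
    | zero => simp [weightedDeriv_apply]
    | succ j =>
      have h := weightedDeriv_X_pow_succ c (2 * j + 1)
      rw [CharP.cast_eq_zero, mul_zero, add_zero, pow_zero, mul_one, mul_add_one, h,
        Nat.add_sub_cancel]
      push_cast
      simp only [C_add, C_sub, C_mul, C_1, C_ofNat]
      ring
  | succ l ih =>
    rw [Nat.cast_succ, mul_add_one, ← add_assoc, pow_succ', mul_left_comm,
      weightedDeriv_add_two_mul, ih]
    ring

lemma weightedDeriv_evenForm {n k : ℕ} {u : ℕ → ℚ} (hu : u (k + 1) = 0) :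
    weightedDeriv (2 * (n + k) + 1 : ℚ) (evenForm n k u) =
      2 * X * evenForm (n + 1) k (fwdDiff 1 u) := by
  set f : ℕ → ℕ → ℚ[X] := fun j l ↦
    C (halfPochhammer (n + j) / j.factorial * (j * u j)) *
      (X ^ (2 * (j - 1)) * (X ^ 2 - 1) ^ l) with hf
  have hterm {j l : ℕ} (h : j + l = k) :
      weightedDeriv (2 * (n + k) + 1 : ℚ)
        (C (halfPochhammer (n + j) / j.factorial * u j) * (X ^ (2 * j) * (X ^ 2 - 1) ^ l)) =
      2 * X * (f j (l + 1) - C (halfPochhammer (n + 1 + j) / j.factorial * u j) *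
        (X ^ (2 * j) * (X ^ 2 - 1) ^ l)) := by
    rw [← smul_eq_C_mul, map_smul, smul_eq_C_mul, ← h,
      show (2 * (n + (j + l : ℕ)) + 1 : ℚ) = 2 * (n + j + 1 / 2) + 2 * l by push_cast; ring,
      weightedDeriv_X_pow_mul_X_sq_sub_one_pow, add_right_comm n, halfPochhammer_succ]
    simp only [hf, C_mul, C_ofNat, mul_div_right_comm, Nat.cast_add]
    ring
  have hshift : ∑ jl ∈ antidiagonal k, f jl.1 (jl.2 + 1) =
      ∑ jl ∈ antidiagonal k, f (jl.1 + 1) jl.2 := by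
    have h₁ := Finset.Nat.sum_antidiagonal_succ (f := fun jl ↦ f jl.1 jl.2) (n := k)
    have h₂ := Finset.Nat.sum_antidiagonal_succ' (f := fun jl ↦ f jl.1 jl.2) (n := k)
    simpa [hf, hu] using h₂.symm.trans h₁
  rw [evenForm_apply, map_sum, Finset.sum_congr rfl fun jl hjl ↦ hterm (mem_antidiagonal.mp hjl),
    ← Finset.mul_sum, Finset.sum_sub_distrib, hshift, ← Finset.sum_sub_distrib, evenForm_apply]
  simp only [hf, factorial_succ_div_mul, fwdDiff, mul_sub, sub_mul, C_sub, Nat.add_sub_cancel,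
    add_right_comm n 1, ← add_assoc]

lemma fwdDiff_eq_zero {u : ℕ → ℚ} {k : ℕ} (hu : ∀ j > k, u j = 0) : ∀ j > k, fwdDiff 1 u j = 0 :=
  fun j hj ↦ by rw [fwdDiff, hu j hj, hu (j + 1) (by lia), sub_zero]

lemma weightedDeriv_iterate_evenForm {n k : ℕ} {u : ℕ → ℚ} (hu : ∀ j > k, u j = 0) :
    weightedDeriv (2 * (n + k) + 5 : ℚ) (weightedDeriv (2 * (n + k) + 3 : ℚ)
      (weightedDeriv (2 * (n + k) + 1 : ℚ) (evenForm n k u))) =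
    X * evenForm (n + 2) (k + 1) fun i ↦
      12 * (fwdDiff 1)^[2] u i + 8 * (i * (fwdDiff 1)^[3] u (i - 1)) := by
  set u₁ := fwdDiff 1 u
  set u₂ := fwdDiff 1 u₁
  have hu₁ : ∀ j > k, u₁ j = 0 := fwdDiff_eq_zero hu
  have hu₂ : ∀ j > k, u₂ j = 0 := fwdDiff_eq_zero hu₁
  have h₁ : _ = 2 * X * evenForm (n + 1) k u₁ := weightedDeriv_evenForm (hu (k + 1) (by lia))
  have h₂ : _ = 2 * X * evenForm (n + 2) k u₂ := weightedDeriv_evenForm (hu₁ (k + 1) (by lia))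
  have h₃ : _ = 2 * X * evenForm (n + 3) k (fwdDiff 1 u₂) :=
    weightedDeriv_evenForm (hu₂ (k + 1) (by lia))
  rw [show (2 * ((n + 1 : ℕ) + k) + 1 : ℚ) = 2 * (n + k) + 3 by push_cast; ring] at h₂
  rw [show (2 * ((n + 2 : ℕ) + k) + 1 : ℚ) = 2 * (n + k) + 5 by push_cast; ring] at h₃
  have hsq := weightedDeriv_add_two_mul (2 * (n + k) + 3 : ℚ) (evenForm (n + 1) k u₁)
  rw [add_assoc, show (3 + 2 : ℚ) = 5 by norm_num, h₂] at hsq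
  have h_two (c : ℚ) (P : ℚ[X]) : weightedDeriv c (2 * P) = 2 * weightedDeriv c P := by
    rw [two_mul, map_add, two_mul]
  have hv : _ = evenForm (n + 2) (k + 1) u₂ := X_sq_sub_one_mul_evenForm (hu₂ (k + 1) (by lia))
  have hcomb : (fun i : ℕ ↦ 12 * (fwdDiff 1)^[2] u i + 8 * (i * (fwdDiff 1)^[3] u (i - 1))) =
      (12 : ℚ) • u₂ + (8 : ℚ) • fun i : ℕ ↦ i * fwdDiff 1 u₂ (i - 1) := rfl
  calc
    _ = 2 * (weightedDeriv (2 * (n + k) + 5 : ℚ) ((X ^ 2 - 1) * evenForm (n + 1) k u₁) +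
        2 * weightedDeriv (2 * (n + k) + 5 : ℚ) (X * (X * evenForm (n + 2) k u₂))) := by
      rw [h₁, mul_assoc, h_two, weightedDeriv_X_mul, h₂, h_two, map_add, mul_assoc, mul_left_comm X,
        h_two]
    _ = X * (12 * ((X ^ 2 - 1) * evenForm (n + 2) k u₂) +
        8 * (X ^ 2 * evenForm (n + 3) k (fwdDiff 1 u₂))) := by
      rw [hsq, weightedDeriv_X_mul, weightedDeriv_X_mul, h₃]
      ring
    _ = _ := by
      rw [hv, X_sq_mul_evenForm, hcomb, map_add, map_smul, map_smul, smul_eq_C_mul, smul_eq_C_mul,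
        C_ofNat, C_ofNat]

lemma leadFunctional_evenForm (d k : ℕ) (u : ℕ → ℚ) :
    leadFunctional (d + k) (evenForm (d + 1) k u) = (-1) ^ (d + 1) * d.factorial / 2 *
      ∑ jl ∈ antidiagonal k, halfPochhammer jl.1 / jl.1.factorial * u jl.1 := by
  rw [evenForm_apply, map_sum, Finset.mul_sum]
  refine Finset.sum_congr rfl fun jl hjl ↦ ?_
  have := (halfPochhammer_pos (d + jl.1 + 1)).ne'
  rw [← smul_eq_C_mul, map_smul, smul_eq_mul, ← mem_antidiagonal.mp hjl, ← add_assoc,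
    leadFunctional_X_pow_mul_X_sq_sub_one_pow, leadWeight, add_right_comm d 1]
  field_simp

end EvenForm

section HyperbolicSeries

open Finset.HasAntidiagonal (antidiagonal mem_antidiagonal)
open scoped PowerSeries

local notation "E" => PowerSeries.exp ℚ

/-- The power series of `tanh t`, for `E = e ^ t`. -/
noncomputable def tanhSeries : ℚ⟦X⟧ := (E ^ 2 - 1) * (E ^ 2 + 1)⁻¹

/-- The power series of `sech t`. -/
noncomputable def sechSeries : ℚ⟦X⟧ := 2 * E * (E ^ 2 + 1)⁻¹

/-- The power series of `(tanh t) / t`. -/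
noncomputable def tanhDivX : ℚ⟦X⟧ := PowerSeries.mk fun n ↦ PowerSeries.coeff (n + 1) tanhSeries

lemma exp_sq_add_one_mul_inv : (E ^ 2 + 1) * (E ^ 2 + 1)⁻¹ = 1 :=
  PowerSeries.mul_inv_cancel _ (by simp)

lemma derivative_exp_sq : PowerSeries.derivative ℚ (E ^ 2) = 2 * E ^ 2 := by
  rw [PowerSeries.derivative_pow, PowerSeries.derivative_exp]
  push_cast
  ring

lemma derivative_inv_exp_sq_add_one :
    PowerSeries.derivative ℚ (E ^ 2 + 1)⁻¹ = -2 * E ^ 2 * (E ^ 2 + 1)⁻¹ ^ 2 := by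
  rw [PowerSeries.derivative_inv', map_add, PowerSeries.derivative_one, derivative_exp_sq]
  ring

lemma derivative_tanhSeries : PowerSeries.derivative ℚ tanhSeries = 1 - tanhSeries ^ 2 := by
  rw [tanhSeries, Derivation.leibniz, map_sub, PowerSeries.derivative_one, derivative_exp_sq,
    derivative_inv_exp_sq_add_one]
  simp only [smul_eq_mul]
  linear_combination (1 - E ^ 2 * (E ^ 2 + 1)⁻¹ + (E ^ 2 + 1)⁻¹) * exp_sq_add_one_mul_inv

lemma derivative_sechSeries :
    PowerSeries.derivative ℚ sechSeries = -(tanhSeries * sechSeries) := by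
  have h_two : PowerSeries.derivative ℚ (2 : ℚ⟦X⟧) = 0 := by
    exact_mod_cast (PowerSeries.derivative ℚ).map_natCast 2
  rw [sechSeries, Derivation.leibniz, Derivation.leibniz, PowerSeries.derivative_exp, h_two,
    derivative_inv_exp_sq_add_one, tanhSeries]
  simp only [smul_eq_mul]
  linear_combination (-2 * E * (E ^ 2 + 1)⁻¹) * exp_sq_add_one_mul_inv

lemma X_mul_tanhDivX : PowerSeries.X * tanhDivX = tanhSeries := by
  have h := PowerSeries.eq_X_mul_shift_add_const tanhSeries
  rwa [show PowerSeries.constantCoeff tanhSeries = 0 by simp [tanhSeries], map_zero, add_zero,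
    eq_comm] at h

lemma X_mul_derivative_tanhDivX : PowerSeries.X * PowerSeries.derivative ℚ tanhDivX =
    1 - PowerSeries.X ^ 2 * tanhDivX ^ 2 - tanhDivX := by
  have h := derivative_tanhSeries
  rw [← X_mul_tanhDivX, Derivation.leibniz, PowerSeries.derivative_X] at h
  simp only [smul_eq_mul] at h
  linear_combination h

lemma X_sq_dvd_one_sub_tanhDivX : PowerSeries.X ^ 2 ∣ 1 - tanhDivX := by
  have h₀ : 0 = 1 - PowerSeries.constantCoeff tanhDivX := by
    simpa using congrArg PowerSeries.constantCoeff X_mul_derivative_tanhDivX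
  have h₁ := congrArg (PowerSeries.coeff 1) X_mul_derivative_tanhDivX
  rw [PowerSeries.coeff_succ_X_mul, PowerSeries.coeff_derivative, map_sub, map_sub,
    PowerSeries.coeff_X_pow_mul', if_neg (by norm_num), PowerSeries.coeff_one] at h₁
  simp only [zero_add, Nat.cast_zero, mul_one, one_ne_zero, if_false, sub_zero, zero_sub] at h₁
  refine PowerSeries.X_pow_dvd_iff.mpr fun m hm ↦ ?_
  interval_cases m
  · simp [← h₀]
  · rw [map_sub, PowerSeries.coeff_one, if_neg one_ne_zero]
    linarith

lemma coeff_eq_of_mul_exp_sq_sub_one {Y : ℚ⟦X⟧} (hY : Y * (E ^ 2 - 1) = 2 * PowerSeries.X * E)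
    (n : ℕ) : PowerSeries.coeff n Y = (2 - 2 ^ n) * _root_.bernoulli n / n.factorial := by
  have h_two : PowerSeries.C (2 : ℚ) = 2 := map_ofNat _ 2
  have h₁ := bernoulliPowerSeries_mul_exp_sub_one ℚ
  have h₂ := congrArg (PowerSeries.rescale (2 : ℚ)) h₁
  rw [map_mul, map_sub, map_one, PowerSeries.rescale_X, h_two,
    ← Nat.cast_two, ← PowerSeries.exp_pow_eq_rescale_exp] at h₂
  have hne : E ^ 2 - 1 ≠ 0 := by
    intro h
    have := congrArg (PowerSeries.coeff 1) (hY.symm.trans (by rw [h, mul_zero]))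
    rw [mul_assoc, ← h_two, PowerSeries.coeff_C_mul, PowerSeries.coeff_succ_X_mul] at this
    simp at this
  have hY' : Y = 2 * bernoulliPowerSeries ℚ -
      PowerSeries.rescale (2 : ℚ) (bernoulliPowerSeries ℚ) := by
    apply mul_right_cancel₀ hne
    push_cast at h₂
    linear_combination hY - 2 * (E + 1) * h₁ + h₂
  rw [hY', map_sub, ← h_two, PowerSeries.coeff_C_mul, PowerSeries.coeff_rescale]
  simp only [bernoulliPowerSeries, PowerSeries.coeff_mk, Algebra.algebraMap_self, RingHom.id_apply]
  ring

lemma coeff_X_mul_derivative {R : Type*} [CommRing R] (F : R⟦X⟧) (n : ℕ) :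
    PowerSeries.coeff n (PowerSeries.X * PowerSeries.derivative R F) =
      n * PowerSeries.coeff n F := by
  cases n with
  | zero => simp
  | succ n =>
    rw [PowerSeries.coeff_succ_X_mul, PowerSeries.coeff_derivative, Nat.cast_succ, mul_comm]

lemma coeff_mul_pow_eq_zero {R : Type*} [CommRing R] {W : R⟦X⟧} (hW : PowerSeries.X ^ 2 ∣ W)
    (F : R⟦X⟧) {n j : ℕ} (h : n < j) : PowerSeries.coeff (2 * n) (F * W ^ j) = 0 := by
  obtain ⟨V, rfl⟩ := hW
  rw [mul_pow, ← pow_mul, mul_left_comm, PowerSeries.coeff_X_pow_mul', if_neg (by lia)]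

lemma coeff_mul_subst {R : Type*} [CommRing R] {W : R⟦X⟧} (hW : PowerSeries.X ^ 2 ∣ W)
    (F f : R⟦X⟧) (n : ℕ) : PowerSeries.coeff (2 * n) (F * f.subst W) =
      ∑ jl ∈ antidiagonal n,
        PowerSeries.coeff jl.1 f * PowerSeries.coeff (2 * n) (F * W ^ jl.1) := by
  have hs : PowerSeries.HasSubst W := PowerSeries.HasSubst.of_constantCoeff_zero'
    (PowerSeries.X_dvd_iff.mp ((dvd_pow_self _ two_ne_zero).trans hW))
  conv_lhs => rw [PowerSeries.eq_X_pow_mul_shift_add_trunc (n + 1) f]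
  rw [PowerSeries.subst_add hs,
    PowerSeries.subst_mul hs, PowerSeries.subst_pow hs, PowerSeries.subst_X hs, mul_add, map_add,
    mul_left_comm, mul_comm (W ^ _), coeff_mul_pow_eq_zero hW _ n.lt_succ_self, zero_add,
    PowerSeries.subst_coe hs, aeval_eq_sum_range' (PowerSeries.natDegree_trunc_lt f n),
    Finset.mul_sum, map_sum, Finset.Nat.sum_antidiagonal_eq_sum_range_succ
      (fun j _ ↦ PowerSeries.coeff j f * PowerSeries.coeff (2 * n) (F * W ^ j))]
  refine Finset.sum_congr rfl fun j hj ↦ ?_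
  rw [mul_smul_comm, PowerSeries.coeff_smul, PowerSeries.coeff_trunc,
    if_pos (Finset.mem_range.mp hj), smul_eq_mul]

/-- The power series of `(1 - X) ^ (-1 / 2)`. -/
noncomputable def invSqrtOneSub : ℚ⟦X⟧ :=
  PowerSeries.rescale (-1) (PowerSeries.binomialSeries ℚ (-(1 / 2) : ℚ))

lemma coeff_invSqrtOneSub (n : ℕ) :
    PowerSeries.coeff n invSqrtOneSub = halfPochhammer n / n.factorial := by
  have h := Ring.factorial_nsmul_multichoose_eq_ascPochhammer (1 / 2 : ℚ) n
  rw [Polynomial.ascPochhammer_smeval_eq_eval, nsmul_eq_mul, ← halfPochhammer] at h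
  rw [invSqrtOneSub, PowerSeries.coeff_rescale, PowerSeries.binomialSeries_coeff, Ring.choose_neg',
    ← h, mul_div_cancel_left₀ _ (mod_cast n.factorial_ne_zero)]
  simp [Int.negOnePow_def, Units.smul_def, ← mul_assoc, ← mul_pow]

lemma invSqrtOneSub_sq_mul : invSqrtOneSub ^ 2 * (1 - PowerSeries.X) = 1 := by
  have h : (PowerSeries.binomialSeries ℚ (-(1 / 2) : ℚ)) ^ 2 * (1 + PowerSeries.X) = 1 := by
    have h_one := PowerSeries.binomialSeries_nat (R := ℚ) (A := ℚ) 1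
    rw [Nat.cast_one, pow_one] at h_one
    rw [sq, ← h_one, ← PowerSeries.binomialSeries_add, ← PowerSeries.binomialSeries_add]
    norm_num
  simpa [invSqrtOneSub, PowerSeries.rescale_X, sub_eq_add_neg] using
    congrArg (PowerSeries.rescale (-1 : ℚ)) h

/-- The power series of `√(t / tanh t)`. -/
noncomputable def sqrtDivTanh : ℚ⟦X⟧ := invSqrtOneSub.subst (1 - tanhDivX)

lemma hasSubst_one_sub_tanhDivX : PowerSeries.HasSubst (1 - tanhDivX) :=
  PowerSeries.HasSubst.of_constantCoeff_zero'
    (PowerSeries.X_dvd_iff.mp ((dvd_pow_self _ two_ne_zero).trans X_sq_dvd_one_sub_tanhDivX))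

lemma sqrtDivTanh_sq_mul : sqrtDivTanh ^ 2 * tanhDivX = 1 := by
  have h := congrArg (PowerSeries.substAlgHom hasSubst_one_sub_tanhDivX) invSqrtOneSub_sq_mul
  rwa [map_mul, map_pow, map_sub, map_one, PowerSeries.substAlgHom_X, PowerSeries.coe_substAlgHom,
    sub_sub_cancel] at h

lemma constantCoeff_sqrtDivTanh : PowerSeries.constantCoeff sqrtDivTanh = 1 := by
  have h := coeff_mul_subst X_sq_dvd_one_sub_tanhDivX 1 invSqrtOneSub 0
  simpa [sqrtDivTanh, coeff_invSqrtOneSub, halfPochhammer_zero] using h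

lemma X_mul_derivative_sqrtDivTanh :
    2 * tanhDivX * (PowerSeries.X * PowerSeries.derivative ℚ sqrtDivTanh) =
      (PowerSeries.X ^ 2 * tanhDivX ^ 2 - (1 - tanhDivX)) * sqrtDivTanh := by
  have hne : sqrtDivTanh ≠ 0 := by
    intro h
    simpa [h] using sqrtDivTanh_sq_mul
  have h := congrArg (PowerSeries.derivative ℚ) sqrtDivTanh_sq_mul
  rw [Derivation.leibniz, PowerSeries.derivative_pow, PowerSeries.derivative_one] at h
  simp only [smul_eq_mul, Nat.cast_ofNat, Nat.add_one_sub_one, pow_one] at h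
  apply mul_left_cancel₀ hne
  linear_combination PowerSeries.X * h - sqrtDivTanh ^ 2 * X_mul_derivative_tanhDivX

/-- The power series of `sech t · √(t / tanh t)`. -/
noncomputable def weightKernel : ℚ⟦X⟧ := sechSeries * sqrtDivTanh

lemma X_mul_derivative_weightKernel :
    2 * tanhDivX * (PowerSeries.X * PowerSeries.derivative ℚ weightKernel) =
      -(PowerSeries.X ^ 2 * tanhDivX ^ 2 + (1 - tanhDivX)) * weightKernel := by
  rw [weightKernel, Derivation.leibniz, derivative_sechSeries, ← X_mul_tanhDivX]
  simp only [smul_eq_mul]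
  linear_combination sechSeries * X_mul_derivative_sqrtDivTanh

lemma weightKernel_mul_sqrtDivTanh_mul :
    weightKernel * sqrtDivTanh * (E ^ 2 - 1) = 2 * PowerSeries.X * E := by
  have h : (E ^ 2 - 1) = PowerSeries.X * tanhDivX * (E ^ 2 + 1) := by
    rw [X_mul_tanhDivX, tanhSeries]
    linear_combination -(E ^ 2 - 1) * exp_sq_add_one_mul_inv
  rw [h, weightKernel, sechSeries]
  linear_combination 2 * PowerSeries.X * E * sqrtDivTanh ^ 2 * tanhDivX * exp_sq_add_one_mul_inv +
    2 * PowerSeries.X * E * sqrtDivTanh_sq_mul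

lemma two_mul_X_mul_derivative_weightKernel_mul (i : ℕ) :
    2 * (PowerSeries.X * PowerSeries.derivative ℚ
      (weightKernel * tanhDivX * (1 - tanhDivX) ^ i)) =
    weightKernel * (1 - tanhDivX) ^ (i + 1) -
      3 * (PowerSeries.X ^ 2 * (weightKernel * tanhDivX ^ 2 * (1 - tanhDivX) ^ i)) +
      2 * (i : ℚ⟦X⟧) *
        (PowerSeries.X ^ 2 * (weightKernel * tanhDivX ^ 3 * (1 - tanhDivX) ^ (i - 1)) -
          weightKernel * tanhDivX * (1 - tanhDivX) ^ i) := by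
  have hpow : (i : ℚ⟦X⟧) * (1 - tanhDivX) ^ i =
      i * (1 - tanhDivX) * (1 - tanhDivX) ^ (i - 1) := by
    cases i with
    | zero => simp
    | succ i => rw [Nat.add_sub_cancel, pow_succ']; ring
  rw [Derivation.leibniz, Derivation.leibniz, PowerSeries.derivative_pow, map_sub,
    PowerSeries.derivative_one]
  simp only [smul_eq_mul]
  linear_combination (1 - tanhDivX) ^ i * X_mul_derivative_weightKernel +
    (2 * weightKernel * (1 - tanhDivX) ^ i - 2 * weightKernel * tanhDivX * i *
      (1 - tanhDivX) ^ (i - 1)) * X_mul_derivative_tanhDivX +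
    2 * weightKernel * tanhDivX * hpow

lemma iterate_fwdDiff_coeff_mul_pow {R : Type*} [CommRing R] (F W : R⟦X⟧) (n m : ℕ) :
    (fwdDiff 1)^[m] (fun i : ℕ ↦ PowerSeries.coeff n (F * W ^ i)) =
      fun i ↦ PowerSeries.coeff n (F * (W - 1) ^ m * W ^ i) := by
  induction m with
  | zero => simp
  | succ m ih =>
    rw [Function.iterate_succ_apply', ih]
    funext i
    rw [fwdDiff, ← map_sub]
    ring_nf

/-- The weights of the even coefficients of `resolventSeries`, in the sense of `evenForm`. -/
noncomputable def resolventWeight (n j : ℕ) : ℚ :=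
  PowerSeries.coeff (2 * n) (weightKernel * (1 - tanhDivX) ^ j)

lemma resolventWeight_eq_zero (n : ℕ) : ∀ j > n, resolventWeight n j = 0 :=
  fun _ hj ↦ coeff_mul_pow_eq_zero X_sq_dvd_one_sub_tanhDivX _ hj

lemma resolventWeight_zero_zero : resolventWeight 0 0 = 1 := by
  have h_two : PowerSeries.constantCoeff (2 : ℚ⟦X⟧) = 2 := map_ofNat _ 2
  norm_num [resolventWeight, weightKernel, sechSeries, constantCoeff_sqrtDivTanh, h_two]

lemma iterate_fwdDiff_resolventWeight (n m i : ℕ) : (fwdDiff 1)^[m] (resolventWeight n) i =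
    (-1) ^ m * PowerSeries.coeff (2 * n) (weightKernel * tanhDivX ^ m * (1 - tanhDivX) ^ i) := by
  have h := congrFun (iterate_fwdDiff_coeff_mul_pow weightKernel (1 - tanhDivX) (2 * n) m) i
  rw [sub_sub_cancel_left, neg_pow, ← map_one PowerSeries.C, ← map_neg, ← map_pow,
    mul_left_comm, mul_assoc, PowerSeries.coeff_C_mul] at h
  exact h

lemma resolventWeight_succ (n i : ℕ) :
    resolventWeight (n + 1) i +
        2 * (2 * n + 2 + i + 1 / 2) * fwdDiff 1 (resolventWeight (n + 1)) i =
      3 * (fwdDiff 1)^[2] (resolventWeight n) i +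
        2 * (i * (fwdDiff 1)^[3] (resolventWeight n) (i - 1)) := by
  have h := congrArg (PowerSeries.coeff (2 * n + 1 + 1))
    (two_mul_X_mul_derivative_weightKernel_mul i)
  have h_two : PowerSeries.C (2 : ℚ) = 2 := map_ofNat _ 2
  have h_three : PowerSeries.C (3 : ℚ) = 3 := map_ofNat _ 3
  rw [← h_two, ← h_three, ← map_natCast (PowerSeries.C (R := ℚ)), ← map_mul] at h
  simp only [map_add, map_sub, PowerSeries.coeff_C_mul, coeff_X_mul_derivative, add_assoc,
    one_add_one_eq_two, PowerSeries.coeff_X_pow_mul] at h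
  have h₁ := iterate_fwdDiff_resolventWeight (n + 1) 1 i
  have h₂ := iterate_fwdDiff_resolventWeight n 2 i
  have h₃ := iterate_fwdDiff_resolventWeight n 3 (i - 1)
  have h₀ : fwdDiff 1 (resolventWeight (n + 1)) i =
    resolventWeight (n + 1) (i + 1) - resolventWeight (n + 1) i := rfl
  rw [Function.iterate_one, mul_add_one, pow_one, pow_one] at h₁
  rw [h₂, h₃]
  simp only [resolventWeight, mul_add_one] at h₀ ⊢
  push_cast at h
  linear_combination h₀ - h + (2 * (2 * n + 2) + 2 * i : ℚ) * h₁

lemma sum_antidiagonal_resolventWeight (n : ℕ) :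
    ∑ jl ∈ antidiagonal n, halfPochhammer jl.1 / jl.1.factorial * resolventWeight n jl.1 =
      (2 - 2 ^ (2 * n)) * _root_.bernoulli (2 * n) / (2 * n).factorial := by
  simp only [← coeff_eq_of_mul_exp_sq_sub_one weightKernel_mul_sqrtDivTanh_mul,
    sqrtDivTanh, coeff_mul_subst X_sq_dvd_one_sub_tanhDivX, coeff_invSqrtOneSub, resolventWeight]

end HyperbolicSeries

section LinearEquations

lemma weightedDeriv_injective_of_odd (q : ℕ) :
    Function.Injective (weightedDeriv (2 * q + 1 : ℚ)) := by
  refine (injective_iff_map_eq_zero _).mpr fun P hP ↦ eq_zero_of_weightedDeriv_eq_zero hP ?_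
  intro hdeg
  replace hdeg : P.natDegree = 2 * q + 1 := mod_cast hdeg
  have hlead : P.leadingCoeff = 0 := by
    rw [leadingCoeff, hdeg, ← leadFunctional_weightedDeriv, hP, map_zero]
  simp [leadingCoeff_eq_zero.mp hlead] at hdeg

lemma weightedDeriv_injOn_degreeLT (c : ℕ) :
    Set.InjOn (weightedDeriv (c : ℚ)) (degreeLT ℚ c) := by
  intro P hP Q hQ h
  have hlt := mem_degreeLT.mp (sub_mem hP hQ)
  rw [← sub_eq_zero, ← map_sub] at h
  by_contra hne
  refine hne (sub_eq_zero.mp (eq_zero_of_weightedDeriv_eq_zero h ?_))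
  exact_mod_cast ((natDegree_lt_iff_degree_lt (sub_ne_zero.mpr hne)).mpr hlt).ne

lemma weightedDeriv_evenForm_resolventWeight_succ (k : ℕ) :
    weightedDeriv (6 * k + 6 : ℚ) (evenForm (2 * k + 2) (k + 1) (resolventWeight (k + 1))) =
      X * evenForm (2 * k + 2) (k + 1) fun i ↦ 3 * (fwdDiff 1)^[2] (resolventWeight k) i +
        2 * (i * (fwdDiff 1)^[3] (resolventWeight k) (i - 1)) := by
  have h := weightedDeriv_evenForm (n := 2 * k + 2)
    (resolventWeight_eq_zero (k + 1) (k + 1 + 1) (by lia))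
  rw [evenForm_succ_left (2 * k + 2),
    show (2 * ((2 * k + 2 : ℕ) + (k + 1 : ℕ)) + 1 : ℚ) = 6 * k + 6 + 1 by push_cast; ring,
    weightedDeriv_add, C_1, one_mul, sub_eq_iff_eq_add] at h
  rw [h, mul_assoc, mul_left_comm, ← mul_add, ← C_ofNat, ← smul_eq_C_mul, ← map_smul, ← map_add]
  congr 1
  refine evenForm_congr fun i ↦ ?_
  rw [← resolventWeight_succ]
  simp only [Pi.add_apply, Pi.smul_apply, smul_eq_mul]
  push_cast
  ring

lemma weightedDeriv_iterate_evenForm_resolventWeight (k : ℕ) :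
    weightedDeriv (6 * k + 5 : ℚ) (weightedDeriv (6 * k + 3 : ℚ)
      (weightedDeriv (6 * k + 1 : ℚ) (evenForm (2 * k) k (resolventWeight k)))) =
    4 * weightedDeriv (6 * k + 6 : ℚ)
      (evenForm (2 * k + 2) (k + 1) (resolventWeight (k + 1))) := by
  have h := weightedDeriv_iterate_evenForm (n := 2 * k) (resolventWeight_eq_zero k)
  rw [show (2 * ((2 * k : ℕ) + k) : ℚ) = 6 * k by push_cast; ring] at h
  rw [h, weightedDeriv_evenForm_resolventWeight_succ, mul_left_comm, ← C_ofNat, ← smul_eq_C_mul,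
    ← map_smul]
  congr 1
  refine evenForm_congr fun i ↦ ?_
  simp only [Pi.smul_apply, smul_eq_mul]
  ring

lemma coeff_resolventSeries_two_mul (k : ℕ) : PowerSeries.coeff (2 * k) resolventSeries =
    C (1 / 2) * evenForm (2 * k) k (resolventWeight k) := by
  induction k with
  | zero =>
    rw [mul_zero, coeff_zero_resolventSeries, evenForm_apply]
    simp [halfPochhammer_zero, resolventWeight_zero_zero]
  | succ k ih =>
    have hmem {P : ℚ[X]} (hP : P ∈ parityDegreeLE ℚ (2 * (k + 1))) : P ∈ degreeLT ℚ (6 * k + 6) :=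
      parityDegreeLE_le_degreeLT (by lia) hP
    refine weightedDeriv_injOn_degreeLT (6 * k + 6)
      (hmem (resolventSeries_mem_gradedSeries (2 * (k + 1))))
      (hmem (C_mul_mem _ (evenForm_mem_parityDegreeLE _ _ _))) ?_
    have hrec := weightedDeriv_coeff_resolventSeries (2 * k)
    rw [show (3 * (2 * k : ℕ) : ℚ) = 6 * k by push_cast; ring, ih, ← smul_eq_C_mul, map_smul,
      map_smul, map_smul, weightedDeriv_iterate_evenForm_resolventWeight, ← mul_smul_comm] at hrec
    rw [← smul_eq_C_mul, map_smul]
    exact_mod_cast (mul_left_cancel₀ (by norm_num : (4 : ℚ[X]) ≠ 0) hrec).symm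

lemma exists_weightedDeriv_eq_QHer_of_odd (k : ℕ) :
    ∃ P ∈ parityDegreeLE ℚ (6 * k + 3), weightedDeriv (6 * k + 3 : ℚ) P = QHer (2 * k + 1) := by
  obtain ⟨P, hP, h⟩ := parityDegreeLE_le_map_weightedDeriv_of_even (K := ℚ) (3 * k + 1)
    (parityDegreeLE_mono (by lia) (by lia) (riccatiCoeff_mem_parityDegreeLE (2 * k + 1)))
  rw [show (2 * (3 * k + 1 : ℕ) + 1 : ℚ) = 6 * k + 3 by push_cast; ring] at h
  exact ⟨P, by rwa [show 6 * k + 3 = 2 * (3 * k + 1) + 1 by ring], h⟩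

lemma exists_weightedDeriv_eq_QHer_of_even (k : ℕ) : ∃ P ∈ parityDegreeLE ℚ (2 * k + 2),
    weightedDeriv (6 * k + 6 : ℚ) P = QHer (2 * k + 2) := by
  obtain ⟨P, hP, h⟩ := parityDegreeLE_le_map_weightedDeriv_of_odd (K := ℚ)
    (show 2 * (k + 1) < 6 * k + 6 by lia) (riccatiCoeff_mem_parityDegreeLE (2 * k + 2))
  exact ⟨P, hP, by exact_mod_cast h⟩

variable {k : ℕ} {P : ℚ[X]}

lemma leadFunctional_coeff_resolventSeries (k : ℕ) :
    leadFunctional (3 * k + 2) (PowerSeries.coeff (2 * k + 2) resolventSeries) =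
      (1 - 2 ^ (2 * k + 1)) * _root_.bernoulli (2 * k + 2) / (4 * (k + 1)) := by
  have h := leadFunctional_evenForm (2 * k + 1) (k + 1) (resolventWeight (k + 1))
  rw [sum_antidiagonal_resolventWeight, show 2 * k + 1 + (k + 1) = 3 * k + 2 by ring,
    show 2 * k + 1 + 1 = 2 * (k + 1) by ring, (even_two_mul (k + 1)).neg_one_pow,
    show (2 * (k + 1)).factorial = (2 * k + 2) * (2 * k + 1).factorial from
      (2 * k + 1).factorial_succ] at h
  have := (2 * k + 1).factorial_ne_zero
  rw [show 2 * k + 2 = 2 * (k + 1) from rfl, coeff_resolventSeries_two_mul, ← smul_eq_C_mul,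
    map_smul, h, smul_eq_mul]
  push_cast
  field_simp
  ring

lemma coeff_of_weightedDeriv_eq_QHer_odd (hP : P ∈ parityDegreeLE ℚ (6 * k + 3))
    (h : weightedDeriv (6 * k + 3 : ℚ) P = QHer (2 * k + 1)) :
    P.coeff (6 * k + 3) =
      (1 - 2 ^ (2 * k + 1)) * _root_.bernoulli (2 * k + 2) / (4 * (k + 1) * (2 * k + 1)) := by
  obtain ⟨N, hN, hQN⟩ := exists_X_sq_sub_one_mul_riccatiCoeff_eq k
  set R := C (4 * (2 * k + 1) : ℚ) * ((X ^ 2 - 1) * P) - N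
  have hR : weightedDeriv (6 * k + 5 : ℚ) R =
      4 * PowerSeries.coeff (2 * k + 2) resolventSeries := by
    have hv := weightedDeriv_add_two_mul (6 * k + 3 : ℚ) P
    rw [add_assoc, show (3 + 2 : ℚ) = 5 by norm_num, h] at hv
    rw [map_sub, ← smul_eq_C_mul, map_smul, hv, smul_eq_C_mul, sub_eq_iff_eq_add]
    exact hQN
  have hR_coeff : R.coeff (6 * k + 5) = 4 * (2 * k + 1) * P.coeff (6 * k + 3) := by
    rw [coeff_sub, coeff_C_mul, coeff_eq_zero_of_mem_parityDegreeLE hN (by lia), sub_mul, one_mul,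
      coeff_sub, coeff_X_pow_mul P 2 (6 * k + 3),
      coeff_eq_zero_of_mem_parityDegreeLE hP (by lia : 6 * k + 3 < 6 * k + 5), sub_zero, sub_zero]
  have hlead := leadFunctional_weightedDeriv (3 * k + 2) R
  rw [show (2 * (3 * k + 2 : ℕ) + 1 : ℚ) = 6 * k + 5 by push_cast; ring, hR, ← C_ofNat,
    ← smul_eq_C_mul, map_smul, leadFunctional_coeff_resolventSeries,
    show 2 * (3 * k + 2) + 1 = 6 * k + 5 by ring, hR_coeff, smul_eq_mul] at hlead
  field_simp at hlead ⊢
  linear_combination -hlead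

lemma coeff_ne_zero_of_weightedDeriv_eq_QHer_even (hP : P ∈ parityDegreeLE ℚ (2 * k + 2))
    (h : weightedDeriv (6 * k + 6 : ℚ) P = QHer (2 * k + 2)) : P.coeff (2 * k + 2) ≠ 0 := by
  intro h₀
  have hneg := coeff_riccatiCoeff_neg (2 * k + 2)
  rw [riccatiCoeff, ← h, coeff_succ_weightedDeriv, h₀,
    coeff_eq_zero_of_mem_parityDegreeLE hP (by lia)] at hneg
  simp at hneg

lemma existsUnique_weightedDeriv_eq_QHer_of_odd (k : ℕ) :
    ∃! P, weightedDeriv (6 * k + 3 : ℚ) P = QHer (2 * k + 1) := by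
  obtain ⟨P, -, h⟩ := exists_weightedDeriv_eq_QHer_of_odd k
  have hinj := weightedDeriv_injective_of_odd (3 * k + 1)
  rw [show (2 * (3 * k + 1 : ℕ) + 1 : ℚ) = 6 * k + 3 by push_cast; ring] at hinj
  exact ⟨P, h, fun Q hQ ↦ hinj (hQ.trans h.symm)⟩

lemma existsUnique_weightedDeriv_eq_QHer_of_even (k : ℕ) :
    ∃! P, P ∈ degreeLT ℚ (6 * k + 6) ∧ weightedDeriv (6 * k + 6 : ℚ) P = QHer (2 * k + 2) := by
  obtain ⟨P, hP, h⟩ := exists_weightedDeriv_eq_QHer_of_even k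
  refine ⟨P, ⟨parityDegreeLE_le_degreeLT (by lia) hP, h⟩, fun Q hQ ↦ ?_⟩
  refine weightedDeriv_injOn_degreeLT _ hQ.1 (parityDegreeLE_le_degreeLT (by lia) hP) ?_
  exact_mod_cast hQ.2.trans h.symm

lemma bernoulli_two_mul_ne_zero (hk : k ≠ 0) : _root_.bernoulli (2 * k) ≠ 0 := by
  intro h
  have hsum := hasSum_zeta_nat hk
  simp only [h, Rat.cast_zero, mul_zero, zero_div] at hsum
  have hle := le_hasSum hsum 1 fun j _ ↦ by positivity
  norm_num at hle

lemma coeff_ne_zero_of_weightedDeriv_eq_QHer_odd (hP : P ∈ parityDegreeLE ℚ (6 * k + 3))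
    (h : weightedDeriv (6 * k + 3 : ℚ) P = QHer (2 * k + 1)) : P.coeff (6 * k + 3) ≠ 0 := by
  have hpow : (1 : ℚ) < 2 ^ (2 * k + 1) := one_lt_pow₀ one_lt_two (2 * k).succ_ne_zero
  have hB : _root_.bernoulli (2 * k + 2) ≠ 0 := bernoulli_two_mul_ne_zero k.succ_ne_zero
  rw [coeff_of_weightedDeriv_eq_QHer_odd hP h]
  exact div_ne_zero (mul_ne_zero (by linarith) hB) (by positivity)

lemma two_pow_mul_bernoulli_half (k : ℕ) :
    (2 : ℚ) ^ (2 * k + 1) * ((2 ^ ((1 : ℤ) - 2 * (k + 1 : ℕ)) - 1) * _root_.bernoulli (2 * k + 2)) =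
      (1 - 2 ^ (2 * k + 1)) * _root_.bernoulli (2 * k + 2) := by
  have hpow : (2 : ℚ) ^ ((1 : ℤ) - 2 * (k + 1 : ℕ)) = (2 ^ (2 * k + 1))⁻¹ := by
    rw [← zpow_natCast, ← zpow_neg]
    push_cast
    ring_nf
  rw [hpow, ← mul_assoc, mul_sub_one, mul_inv_cancel₀ (by positivity)]

end LinearEquations

/-- For every `k ≥ 1`:
(i) the equation `(X²−1)P′ − 3(2k−1)XP = Q_{2k−1}` has exactly one polynomial solution,
which is odd of degree exactly `6k−3` with leading coefficient
`2^{2k−1}·B_{2k}(1/2)/(4k(2k−1))` where `B_{2k}(1/2) = (2^{1−2k}−1)·B_{2k}`; and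
(ii) the equation `(X²−1)P′ − 6kXP = Q_{2k}` has exactly one polynomial solution of degree
`< 6k`, which is even of degree exactly `2k`. -/
theorem stmt11 (k : ℕ) (hk : 1 ≤ k) :
    (∃! P : Polynomial ℚ,
        (X ^ 2 - 1) * derivative P - C (6 * (k : ℚ) - 3) * X * P = QHer (2 * k - 1)) ∧
    (∀ P : Polynomial ℚ,
        (X ^ 2 - 1) * derivative P - C (6 * (k : ℚ) - 3) * X * P = QHer (2 * k - 1) →
        P.comp (-X) = -P ∧ P.degree = (6 * k - 3 : ℕ) ∧
        P.leadingCoeff =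
          (2 : ℚ) ^ (2 * k - 1) * (((2 : ℚ) ^ ((1 : ℤ) - 2 * (k : ℤ)) - 1) * _root_.bernoulli (2 * k))
            / (4 * (k : ℚ) * (2 * (k : ℚ) - 1))) ∧
    (∃! P : Polynomial ℚ,
        P.degree < (6 * k : ℕ) ∧
        (X ^ 2 - 1) * derivative P - C (6 * (k : ℚ)) * X * P = QHer (2 * k)) ∧
    (∀ P : Polynomial ℚ,
        P.degree < (6 * k : ℕ) →
        (X ^ 2 - 1) * derivative P - C (6 * (k : ℚ)) * X * P = QHer (2 * k) →
        P.comp (-X) = P ∧ P.degree = (2 * k : ℕ)) := by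
  obtain ⟨n, rfl⟩ : ∃ n, k = n + 1 := ⟨k - 1, by lia⟩
  have hodd : (6 * (n + 1 : ℕ) - 3 : ℚ) = 6 * n + 3 := by push_cast; ring
  have heven : (6 * (n + 1 : ℕ) : ℚ) = 6 * n + 6 := by push_cast; ring
  simp only [← weightedDeriv_apply, ← mem_degreeLT]
  rw [hodd, heven]
  have huniq := existsUnique_weightedDeriv_eq_QHer_of_odd n
  have huniq' := existsUnique_weightedDeriv_eq_QHer_of_even n
  refine ⟨huniq, fun P hP ↦ ?_, huniq', fun P hlt hP ↦ ?_⟩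
  · obtain ⟨P₀, hmem, hP₀⟩ := exists_weightedDeriv_eq_QHer_of_odd n
    obtain rfl : P₀ = P := huniq.unique hP₀ hP
    have hdeg := degree_eq_of_mem_parityDegreeLE hmem
      (coeff_ne_zero_of_weightedDeriv_eq_QHer_odd hmem hP)
    refine ⟨comp_neg_X_of_mem_parityDegreeLE_of_odd hmem ⟨3 * n + 1, by ring⟩, hdeg, ?_⟩
    rw [leadingCoeff, natDegree_eq_of_degree_eq_some hdeg,
      coeff_of_weightedDeriv_eq_QHer_odd hmem hP, ← two_pow_mul_bernoulli_half]
    congr 1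
    push_cast
    ring
  · obtain ⟨P₀, hmem, hP₀⟩ := exists_weightedDeriv_eq_QHer_of_even n
    obtain rfl : P₀ = P :=
      huniq'.unique ⟨parityDegreeLE_le_degreeLT (by lia) hmem, hP₀⟩ ⟨hlt, hP⟩
    exact ⟨comp_neg_X_of_mem_parityDegreeLE_of_even hmem (even_two_mul (n + 1)),
      degree_eq_of_mem_parityDegreeLE hmem
        (coeff_ne_zero_of_weightedDeriv_eq_QHer_even hmem hP)⟩
end
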